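/- arXiv:2501.04853 — 4 statements merged into one kernel-verified Lean document; each statement's English description precedes it below -/
import Mathlib

section
/- (Theorem 1, missing-data and outcome models correct.) Fix d in {(1,1),(0,1),(1,0)} and d' = (0,0). Suppose Assumption DID holds for d and for d', Assumption MAR holds, P(D = d | X) > 0 and P(D = d' | X) > 0 a.s., all four Hájek-weight denominators are finite and strictly positive, and all expectations defining τ^R_{dd'} are finite. If, a.s., φ_{d2}(X) = q_{d2}(X) and φ_0(X) = q_0(X), and μ_d(X) = m_d(X) and μ_{d'}(X) = m_{d'}(X), while π_{d1|d2}, π_{0|0}, π_{d2}, π_0 are arbitrary (0,1)-valued measurable functions of X, then τ^R_{dd'} = τ_{dd'}. -/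
open MeasureTheory Set
open scoped Classical

noncomputable section

namespace DIDMissing

variable {Ω : Type*} {𝓧 : Type*}

/-- Real-valued indicator of a set. -/
def ind (A : Set Ω) : Ω → ℝ := A.indicator fun _ => (1 : ℝ)

/-- All treatment paths `{0,1}²` (coded as reals). -/
def allPaths : Set (ℝ × ℝ) := {(0, 0), (0, 1), (1, 0), (1, 1)}

/-- The three treated paths `{(1,1), (0,1), (1,0)}`. -/
def threePaths : Set (ℝ × ℝ) := {(1, 1), (0, 1), (1, 0)}

/-- The event `{D = d}` for a treatment path `d = (d₁, d₂)`. -/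
def evD (D1 D2 : Ω → ℝ) (d : ℝ × ℝ) : Set Ω := {ω | D1 ω = d.1 ∧ D2 ω = d.2}

/-- The event `{D₂ = b}`. -/
def evD2 (D2 : Ω → ℝ) (b : ℝ) : Set Ω := {ω | D2 ω = b}

/-- `g` is a (measurable-in-the-covariate) version of the conditional mean `E[Z ∣ A, X]`:
for every bounded measurable `h`, `E[1_A · Z · h(X)] = E[1_A · g(X) · h(X)]`. -/
def IsCondMeanGiven [MeasurableSpace Ω] [MeasurableSpace 𝓧] (P : Measure Ω) (X : Ω → 𝓧)
    (A : Set Ω) (Z : Ω → ℝ) (g : 𝓧 → ℝ) : Prop :=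
  Measurable g ∧
    ∀ h : 𝓧 → ℝ, Measurable h → (∃ C, ∀ x, |h x| ≤ C) →
      ∫ ω, ind A ω * Z ω * h (X ω) ∂P = ∫ ω, ind A ω * g (X ω) * h (X ω) ∂P

/-- Assumption DID for a path `d` relative to `d' = (0,0)`:
(i) no anticipation, `E[Y₀(d) ∣ D = d, X] = E[Y₀(0,0) ∣ D = d, X]` a.s., stated in the
version-free integral form; and (ii) conditional parallel trends, stated as the existence
of a common version of `E[Y₂(0,0) − Y₀(0,0) ∣ X]` and `E[Y₂(0,0) − Y₀(0,0) ∣ D = d, X]`. -/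
def DID [MeasurableSpace Ω] [MeasurableSpace 𝓧] (P : Measure Ω) (X : Ω → 𝓧)
    (D1 D2 : Ω → ℝ) (Y0p Y2p : ℝ × ℝ → Ω → ℝ) (d : ℝ × ℝ) : Prop :=
  (∀ h : 𝓧 → ℝ, Measurable h → (∃ C, ∀ x, |h x| ≤ C) →
      ∫ ω, ind (evD D1 D2 d) ω * Y0p d ω * h (X ω) ∂P
        = ∫ ω, ind (evD D1 D2 d) ω * Y0p (0, 0) ω * h (X ω) ∂P) ∧
  (∃ tr : 𝓧 → ℝ,
      IsCondMeanGiven P X Set.univ (fun ω => Y2p (0, 0) ω - Y0p (0, 0) ω) tr ∧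
      IsCondMeanGiven P X (evD D1 D2 d) (fun ω => Y2p (0, 0) ω - Y0p (0, 0) ω) tr)

/-- Assumption MAR: `S ⟂ (D₁, ΔY) ∣ (D₂, X)`, where `q d₂` is a version of the
missing-data probability `P(S = 1 ∣ D₂ = d₂, X)`, which is `(0,1]`-valued a.s. -/
def MAR [MeasurableSpace Ω] [MeasurableSpace 𝓧] (P : Measure Ω) (X : Ω → 𝓧)
    (D1 D2 S Y0 Y2 : Ω → ℝ) (q : ℝ → 𝓧 → ℝ) : Prop :=
  (∀ d2 ∈ ({0, 1} : Set ℝ), IsCondMeanGiven P X (evD2 D2 d2) S (q d2)) ∧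
  (∀ d2 ∈ ({0, 1} : Set ℝ), ∀ᵐ ω ∂P, 0 < q d2 (X ω) ∧ q d2 (X ω) ≤ 1) ∧
  (∀ d2 ∈ ({0, 1} : Set ℝ), ∀ f : ℝ × ℝ → ℝ, Measurable f → (∃ C, ∀ p, |f p| ≤ C) →
      ∀ h : 𝓧 → ℝ, Measurable h → (∃ C, ∀ x, |h x| ≤ C) →
        ∫ ω, ind (evD2 D2 d2) ω * S ω * f (D1 ω, Y2 ω - Y0 ω) * h (X ω) ∂P
          = ∫ ω, ind (evD2 D2 d2) ω * q d2 (X ω) * f (D1 ω, Y2 ω - Y0 ω) * h (X ω) ∂P)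

/-- The path-dependent ATT `τ_{d,(0,0)} = E[Y₂(d) − Y₂(0,0) ∣ D = d]`. -/
def tau [MeasurableSpace Ω] (P : Measure Ω) (D1 D2 : Ω → ℝ)
    (Y2p : ℝ × ℝ → Ω → ℝ) (d : ℝ × ℝ) : ℝ :=
  (P (evD D1 D2 d)).toReal⁻¹ * ∫ ω in evD D1 D2 d, (Y2p d ω - Y2p (0, 0) ω) ∂P

/-- Numerator of the Hájek weight `w₁`. -/
def n1 (X : Ω → 𝓧) (D1 D2 S : Ω → ℝ) (φ2 : 𝓧 → ℝ) (d : ℝ × ℝ) : Ω → ℝ :=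
  fun ω => S ω / φ2 (X ω) * ind (evD D1 D2 d) ω

/-- Numerator of the Hájek weight `w₂`. -/
def n2 (X : Ω → 𝓧) (D1 D2 S : Ω → ℝ) (φ0 πc πc' π2 π0 : 𝓧 → ℝ) : Ω → ℝ :=
  fun ω => S ω / φ0 (X ω) * (πc (X ω) * π2 (X ω) / (πc' (X ω) * π0 (X ω)))
    * ind (evD D1 D2 (0, 0)) ω

/-- Numerator of the Hájek weight `w₃`. -/
def n3 (X : Ω → 𝓧) (D2 : Ω → ℝ) (πc : 𝓧 → ℝ) (d2 : ℝ) : Ω → ℝ :=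
  fun ω => πc (X ω) * ind (evD2 D2 d2) ω

/-- Numerator of the Hájek weight `w₄`. -/
def n4 (X : Ω → 𝓧) (D2 S : Ω → ℝ) (φ2 πc : 𝓧 → ℝ) (d2 : ℝ) : Ω → ℝ :=
  fun ω => S ω / φ2 (X ω) * πc (X ω) * ind (evD2 D2 d2) ω

/-- The robust estimand `τ^R_{d,(0,0)}`. -/
def tauR [MeasurableSpace Ω] (P : Measure Ω) (X : Ω → 𝓧) (D1 D2 S Y0 Y2 : Ω → ℝ)
    (d : ℝ × ℝ) (μd μd' πc πc' π2 π0 φ2 φ0 : 𝓧 → ℝ) : ℝ :=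
  (∫ ω, (n1 X D1 D2 S φ2 d ω / ∫ ω', n1 X D1 D2 S φ2 d ω' ∂P
        - n2 X D1 D2 S φ0 πc πc' π2 π0 ω / ∫ ω', n2 X D1 D2 S φ0 πc πc' π2 π0 ω' ∂P)
      * (Y2 ω - Y0 ω - μd' (X ω)) ∂P)
  + ∫ ω, (n3 X D2 πc d.2 ω / ∫ ω', n3 X D2 πc d.2 ω' ∂P
        - n4 X D2 S φ2 πc d.2 ω / ∫ ω', n4 X D2 S φ2 πc d.2 ω' ∂P)
      * (μd (X ω) - μd' (X ω)) ∂P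

lemma ind_meas [MeasurableSpace Ω] {A : Set Ω} (hA : MeasurableSet A) : Measurable (ind A) :=
  measurable_const.indicator hA

lemma ind_bd (A : Set Ω) (ω : Ω) : 0 ≤ ind A ω ∧ ind A ω ≤ 1 := by
  unfold ind
  by_cases h : ω ∈ A <;> simp [h]

lemma ind_int [MeasurableSpace Ω] {P : Measure Ω} {A : Set Ω} (hA : MeasurableSet A)
    {f : Ω → ℝ} (hf : Integrable f P) : Integrable (fun ω => ind A ω * f ω) P := by
  refine hf.bdd_mul (c := 1) (ind_meas hA).aestronglyMeasurable (Filter.Eventually.of_forall ?_)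
  intro ω
  have := ind_bd A ω
  rw [Real.norm_eq_abs, abs_of_nonneg this.1]
  exact this.2

/-- A bounded measurable sign. -/
def sg (x : ℝ) : ℝ := if 0 ≤ x then 1 else -1

lemma sg_meas : Measurable sg :=
  Measurable.ite measurableSet_Ici measurable_const measurable_const

lemma sg_mul (x : ℝ) : x * sg x = |x| := by
  unfold sg
  split_ifs with h
  · rw [abs_of_nonneg h, mul_one]
  · rw [abs_of_neg (not_le.mp h)]; ring

lemma sg_abs (x : ℝ) : |sg x| = 1 := by
  unfold sg
  split_ifs <;> simp

lemma density_ext {E F : Type*} [MeasurableSpace Ω] [MeasurableSpace E] [MeasurableSpace F]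
    (P : Measure Ω) (a b : Ω → ℝ) (ham : Measurable a) (hbm : Measurable b)
    (ha : ∀ᵐ ω ∂P, 0 ≤ a ω) (hb : ∀ᵐ ω ∂P, 0 ≤ b ω)
    (hai : Integrable a P) (hbi : Integrable b P)
    (U : Ω → E) (V : Ω → F) (hU : Measurable U) (hV : Measurable V)
    (H : ∀ (s : Set E) (t : Set F), MeasurableSet s → MeasurableSet t →
      ∫ ω, a ω * s.indicator (fun _ => (1:ℝ)) (U ω) * t.indicator (fun _ => (1:ℝ)) (V ω) ∂P
      = ∫ ω, b ω * s.indicator (fun _ => (1:ℝ)) (U ω) * t.indicator (fun _ => (1:ℝ)) (V ω) ∂P)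
    (K : E × F → ℝ) (hK : Measurable K) :
    ∫ ω, a ω * K (U ω, V ω) ∂P = ∫ ω, b ω * K (U ω, V ω) ∂P := by
  have hT : Measurable fun ω => (U ω, V ω) := hU.prodMk hV
  have key : ∀ (c : Ω → ℝ), Measurable c → (∀ᵐ ω ∂P, 0 ≤ c ω) →
      ∫ ω, c ω * K (U ω, V ω) ∂P
        = ∫ p, K p ∂((P.withDensity fun ω => ENNReal.ofReal (c ω)).map fun ω => (U ω, V ω)) := by
    intro c hcm hc
    rw [integral_map hT.aemeasurable hK.aestronglyMeasurable,
      integral_withDensity_eq_integral_toReal_smul hcm.ennreal_ofReal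
        (Filter.Eventually.of_forall fun _ => ENNReal.ofReal_lt_top)]
    apply integral_congr_ae
    filter_upwards [hc] with ω h
    rw [ENNReal.toReal_ofReal h, smul_eq_mul]
  have key2 : ∀ (c : Ω → ℝ), Measurable c → (∀ᵐ ω ∂P, 0 ≤ c ω) → Integrable c P →
      ∀ (s : Set E) (t : Set F), MeasurableSet s → MeasurableSet t →
      ((P.withDensity fun ω => ENNReal.ofReal (c ω)).map fun ω => (U ω, V ω)) (s ×ˢ t)
        = ENNReal.ofReal (∫ ω, c ω * s.indicator (fun _ => (1:ℝ)) (U ω)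
            * t.indicator (fun _ => (1:ℝ)) (V ω) ∂P) := by
    intro c hcm hc hci s t hs ht
    have hpre : MeasurableSet ((fun ω => (U ω, V ω)) ⁻¹' (s ×ˢ t)) := hT (hs.prod ht)
    rw [Measure.map_apply hT (hs.prod ht), withDensity_apply _ hpre,
      ← ofReal_integral_eq_lintegral_ofReal hci.integrableOn (ae_restrict_of_ae hc),
      ← integral_indicator hpre]
    congr 1
    apply integral_congr_ae
    refine Filter.Eventually.of_forall fun ω => ?_
    by_cases h1 : U ω ∈ s <;> by_cases h2 : V ω ∈ t <;> simp [Set.indicator, h1, h2]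
  rw [key a ham ha, key b hbm hb]
  congr 1
  have : IsFiniteMeasure (P.withDensity fun ω => ENNReal.ofReal (a ω)) :=
    isFiniteMeasure_withDensity_ofReal hai.2
  apply Measure.ext_prod
  intro s t hs ht
  rw [key2 a ham ha hai s t hs ht, key2 b hbm hb hbi s t hs ht, H s t hs ht]

lemma cm_int [MeasurableSpace Ω] [MeasurableSpace 𝓧] {P : Measure Ω} [IsProbabilityMeasure P]
    {X : Ω → 𝓧} (hX : Measurable X) {A : Set Ω} (hA : MeasurableSet A) {Z : Ω → ℝ}
    (hZ : Integrable Z P) {g : 𝓧 → ℝ} (h : IsCondMeanGiven P X A Z g) :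
    Integrable (fun ω => ind A ω * g (X ω)) P := by
  obtain ⟨hg, h⟩ := h
  have hgX : Measurable fun ω => g (X ω) := hg.comp hX
  have hB : ∀ n : ℕ, MeasurableSet {x | |g x| ≤ (n:ℝ)} := fun n =>
    measurableSet_le (by fun_prop) measurable_const
  have hBX : ∀ n : ℕ, MeasurableSet {ω | |g (X ω)| ≤ (n:ℝ)} := fun n => hX (hB n)
  have hφ : AECover P Filter.atTop (fun n : ℕ => {ω | |g (X ω)| ≤ (n:ℝ)}) := by
    constructor
    · refine Filter.Eventually.of_forall fun ω => ?_
      obtain ⟨N, hN⟩ := exists_nat_ge |g (X ω)|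
      filter_upwards [Filter.eventually_ge_atTop N] with n hn
      exact hN.trans (by exact_mod_cast hn)
    · intro n
      exact hX (hB n)
  refine hφ.integrable_of_integral_norm_bounded (∫ ω, ‖Z ω‖ ∂P) ?_ ?_
  · intro n
    refine Measure.integrableOn_of_bounded (M := n) (measure_ne_top _ _)
      ((ind_meas hA).mul hgX).aestronglyMeasurable ?_
    filter_upwards [ae_restrict_mem (hX (hB n))] with ω hω
    have h1 := ind_bd A ω
    have h2 : |g (X ω)| ≤ (n:ℝ) := hω
    rw [Real.norm_eq_abs, abs_mul, abs_of_nonneg h1.1]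
    nlinarith [abs_nonneg (g (X ω))]
  · refine Filter.Eventually.of_forall fun n => ?_
    have hbd : ∀ x, |({x | |g x| ≤ (n:ℝ)} : Set 𝓧).indicator (fun x => sg (g x)) x| ≤ 1 := by
      intro x
      by_cases hx : x ∈ {x | |g x| ≤ (n:ℝ)}
      · rw [Set.indicator_of_mem hx, sg_abs]
      · rw [Set.indicator_of_notMem hx]; simp
    have := h (({x | |g x| ≤ (n:ℝ)} : Set 𝓧).indicator fun x => sg (g x))
      ((sg_meas.comp hg).indicator (hB n)) ⟨1, hbd⟩
    have e : ∫ ω in {ω | |g (X ω)| ≤ (n:ℝ)}, ‖ind A ω * g (X ω)‖ ∂P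
        = ∫ ω, ind A ω * g (X ω) *
          ({x | |g x| ≤ (n:ℝ)} : Set 𝓧).indicator (fun x => sg (g x)) (X ω) ∂P := by
      rw [← integral_indicator (hBX n)]
      apply integral_congr_ae
      refine Filter.Eventually.of_forall fun ω => ?_
      by_cases hx : |g (X ω)| ≤ (n:ℝ)
      · simp only [Set.indicator, Set.mem_ofPred_eq, hx, if_true]
        rw [Real.norm_eq_abs, abs_mul, abs_of_nonneg (ind_bd A ω).1, mul_assoc, sg_mul]
      · simp [Set.indicator, hx]
    rw [e, ← this]
    refine (le_abs_self _).trans ((abs_integral_le_integral_abs).trans ?_)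
    refine integral_mono_of_nonneg (Filter.Eventually.of_forall fun _ => abs_nonneg _) hZ.norm ?_
    refine Filter.Eventually.of_forall fun ω => ?_
    have h1 := ind_bd A ω
    have h2 := hbd (X ω)
    simp only [abs_mul, abs_of_nonneg h1.1, Real.norm_eq_abs]
    calc ind A ω * |Z ω| * _ ≤ 1 * |Z ω| * 1 := by gcongr; exact h1.2
      _ = _ := by ring

lemma cm_unique [MeasurableSpace Ω] [MeasurableSpace 𝓧] {P : Measure Ω}
    {X : Ω → 𝓧} {A : Set Ω} {Z1 Z2 : Ω → ℝ} (hZ : ∀ ω, ind A ω * Z1 ω = ind A ω * Z2 ω)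
    {g1 g2 : 𝓧 → ℝ} (h1 : IsCondMeanGiven P X A Z1 g1) (h2 : IsCondMeanGiven P X A Z2 g2)
    (hX : Measurable X)
    (i1 : Integrable (fun ω => ind A ω * g1 (X ω)) P)
    (i2 : Integrable (fun ω => ind A ω * g2 (X ω)) P) :
    ∀ᵐ ω ∂P, ind A ω * |g1 (X ω) - g2 (X ω)| = 0 := by
  have hm : Measurable fun x => sg (g1 x - g2 x) := sg_meas.comp (h1.1.sub h2.1)
  have hb : ∀ x, |sg (g1 x - g2 x)| ≤ 1 := fun x => (sg_abs _).le
  have e1 := h1.2 _ hm ⟨1, hb⟩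
  have e2 := h2.2 _ hm ⟨1, hb⟩
  simp only [hZ] at e1
  rw [e1] at e2
  have hsX : Measurable fun ω => sg (g1 (X ω) - g2 (X ω)) := hm.comp hX
  have j1 := i1.mul_bdd (c := 1) hsX.aestronglyMeasurable
    (Filter.Eventually.of_forall fun ω => hb (X ω))
  have j2 := i2.mul_bdd (c := 1) hsX.aestronglyMeasurable
    (Filter.Eventually.of_forall fun ω => hb (X ω))
  have e3 := integral_sub j1 j2
  rw [e2, sub_self] at e3
  have e4 : ∀ ω, ind A ω * g1 (X ω) * sg (g1 (X ω) - g2 (X ω))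
      - ind A ω * g2 (X ω) * sg (g1 (X ω) - g2 (X ω)) = ind A ω * |g1 (X ω) - g2 (X ω)| := by
    intro ω
    rw [← sg_mul]; ring
  have j3 := j1.sub j2
  simp only [e4] at e3
  have j4 : Integrable (fun ω => ind A ω * |g1 (X ω) - g2 (X ω)|) P :=
    j3.congr (Filter.Eventually.of_forall e4)
  exact (integral_eq_zero_iff_of_nonneg
    (fun ω => mul_nonneg (ind_bd A ω).1 (abs_nonneg _)) j4).1 e3

lemma orth_ext [MeasurableSpace Ω] [MeasurableSpace 𝓧] {P : Measure Ω}
    {X : Ω → 𝓧} (hX : Measurable X) {W : Ω → ℝ}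
    (hW : ∀ h : 𝓧 → ℝ, Measurable h → (∃ C, ∀ x, |h x| ≤ C) → ∫ ω, W ω * h (X ω) ∂P = 0)
    {r : 𝓧 → ℝ} (hr : Measurable r) : ∫ ω, W ω * r (X ω) ∂P = 0 := by
  by_cases hi : Integrable (fun ω => W ω * r (X ω)) P
  swap
  · exact integral_undef hi
  have hB : ∀ n : ℕ, MeasurableSet {x | |r x| ≤ (n:ℝ)} := fun n =>
    measurableSet_le (by fun_prop) measurable_const
  have hBX : ∀ n : ℕ, MeasurableSet {ω | |r (X ω)| ≤ (n:ℝ)} := fun n => hX (hB n)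
  have hφ : AECover P Filter.atTop (fun n : ℕ => {ω | |r (X ω)| ≤ (n:ℝ)}) := by
    constructor
    · refine Filter.Eventually.of_forall fun ω => ?_
      obtain ⟨N, hN⟩ := exists_nat_ge |r (X ω)|
      filter_upwards [Filter.eventually_ge_atTop N] with n hn
      exact hN.trans (by exact_mod_cast hn)
    · intro n
      exact hX (hB n)
  have ht := hφ.integral_tendsto_of_countably_generated hi
  have hz : ∀ n : ℕ, ∫ ω in {ω | |r (X ω)| ≤ (n:ℝ)}, W ω * r (X ω) ∂P = 0 := by
    intro n
    rw [← integral_indicator (hBX n),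
      ← hW (({x | |r x| ≤ (n:ℝ)} : Set 𝓧).indicator r) (hr.indicator (hB n)) ⟨n, ?_⟩]
    · apply integral_congr_ae
      refine Filter.Eventually.of_forall fun ω => ?_
      by_cases hx : |r (X ω)| ≤ (n:ℝ) <;> simp [Set.indicator, hx]
    · intro x
      by_cases hx : |r x| ≤ (n:ℝ) <;> simp [Set.indicator, hx]
  simp only [hz] at ht
  exact (tendsto_nhds_unique ht tendsto_const_nhds)

lemma mar_ext [MeasurableSpace Ω] [MeasurableSpace 𝓧] {P : Measure Ω} [IsProbabilityMeasure P]
    {X : Ω → 𝓧} (hX : Measurable X) {D1 D2 S Y0 Y2 : Ω → ℝ}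
    (hY0 : Measurable Y0) (hY2 : Measurable Y2)
    (hD1 : Measurable D1) (hD2 : Measurable D2) (hS : Measurable S)
    (hSv : ∀ ω, S ω = 0 ∨ S ω = 1) {q : ℝ → 𝓧 → ℝ} (hMAR : MAR P X D1 D2 S Y0 Y2 q)
    {d2 : ℝ} (hd2 : d2 ∈ ({0, 1} : Set ℝ)) {φ : 𝓧 → ℝ} (hφm : Measurable φ)
    (hφv : ∀ x, 0 < φ x ∧ φ x ≤ 1) (hφ : ∀ᵐ ω ∂P, φ (X ω) = q d2 (X ω))
    (K : (ℝ × ℝ) × 𝓧 → ℝ) (hK : Measurable K) :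
    ∫ ω, S ω / φ (X ω) * ind (evD2 D2 d2) ω * K ((D1 ω, Y2 ω - Y0 ω), X ω) ∂P
      = ∫ ω, ind (evD2 D2 d2) ω * K ((D1 ω, Y2 ω - Y0 ω), X ω) ∂P := by
  have hA : MeasurableSet (evD2 D2 d2) := hD2 (measurableSet_singleton d2)
  have hqm : Measurable (q d2) := (hMAR.1 d2 hd2).1
  have hqv := hMAR.2.1 d2 hd2
  have hind := ind_meas hA
  have hqX : Measurable fun ω => q d2 (X ω) := hqm.comp hX
  have hS1 : ∀ ω, 0 ≤ S ω ∧ S ω ≤ 1 := by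
    intro ω
    rcases hSv ω with h | h <;> rw [h] <;> norm_num
  have main := density_ext P (fun ω => ind (evD2 D2 d2) ω * S ω)
    (fun ω => ind (evD2 D2 d2) ω * q d2 (X ω)) (hind.mul hS) (hind.mul hqX)
    (Filter.Eventually.of_forall fun ω => mul_nonneg (ind_bd _ ω).1 (hS1 ω).1)
    (by filter_upwards [hqv] with ω h using mul_nonneg (ind_bd _ ω).1 h.1.le)
    (ind_int hA (Integrable.of_bound hS.aestronglyMeasurable 1
      (Filter.Eventually.of_forall fun ω => by
        rw [Real.norm_eq_abs, abs_of_nonneg (hS1 ω).1]; exact (hS1 ω).2)))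
    (ind_int hA (Integrable.of_bound hqX.aestronglyMeasurable 1
      (by filter_upwards [hqv] with ω h
          rw [Real.norm_eq_abs, abs_of_nonneg h.1.le]; exact h.2)))
    (fun ω => (D1 ω, Y2 ω - Y0 ω)) X (hD1.prodMk (hY2.sub hY0)) hX
    (by
      intro s t hs ht
      refine hMAR.2.2 d2 hd2 (s.indicator fun _ => 1) (measurable_const.indicator hs) ⟨1, ?_⟩
        (t.indicator fun _ => 1) (measurable_const.indicator ht) ⟨1, ?_⟩
      · intro p
        by_cases h : p ∈ s <;> simp [h]
      · intro p
        by_cases h : p ∈ t <;> simp [h])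
    (fun p => K p / φ p.2) (hK.div (hφm.comp measurable_snd))
  have e1 : ∀ ω, S ω / φ (X ω) * ind (evD2 D2 d2) ω * K ((D1 ω, Y2 ω - Y0 ω), X ω)
      = ind (evD2 D2 d2) ω * S ω * (K ((D1 ω, Y2 ω - Y0 ω), X ω) / φ (X ω)) := fun ω => by ring
  simp only [e1]
  rw [main]
  apply integral_congr_ae
  filter_upwards [hφ] with ω h
  have := (hφv (X ω)).1.ne'
  rw [← h]
  field_simp

lemma ind_evD (D1 D2 : Ω → ℝ) (d : ℝ × ℝ) (ω : Ω) :
    ind (evD D1 D2 d) ω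
      = ind (evD2 D2 d.2) ω * (({d.1} : Set ℝ).indicator (fun _ => (1:ℝ)) (D1 ω)) := by
  by_cases h1 : D1 ω = d.1 <;> by_cases h2 : D2 ω = d.2 <;>
    simp [ind, evD, evD2, Set.indicator, h1, h2]

lemma mar_path [MeasurableSpace Ω] [MeasurableSpace 𝓧] {P : Measure Ω} [IsProbabilityMeasure P]
    {X : Ω → 𝓧} (hX : Measurable X) {D1 D2 S Y0 Y2 : Ω → ℝ}
    (hY0 : Measurable Y0) (hY2 : Measurable Y2)
    (hD1 : Measurable D1) (hD2 : Measurable D2) (hS : Measurable S)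
    (hSv : ∀ ω, S ω = 0 ∨ S ω = 1) {q : ℝ → 𝓧 → ℝ} (hMAR : MAR P X D1 D2 S Y0 Y2 q)
    {d : ℝ × ℝ} (hd2 : d.2 ∈ ({0, 1} : Set ℝ)) {φ : 𝓧 → ℝ} (hφm : Measurable φ)
    (hφv : ∀ x, 0 < φ x ∧ φ x ≤ 1) (hφ : ∀ᵐ ω ∂P, φ (X ω) = q d.2 (X ω))
    (K : ℝ × 𝓧 → ℝ) (hK : Measurable K) :
    ∫ ω, S ω / φ (X ω) * ind (evD D1 D2 d) ω * K (Y2 ω - Y0 ω, X ω) ∂P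
      = ∫ ω, ind (evD D1 D2 d) ω * K (Y2 ω - Y0 ω, X ω) ∂P := by
  have := mar_ext hX hY0 hY2 hD1 hD2 hS hSv hMAR hd2 hφm hφv hφ
    (fun p => ({d.1} : Set ℝ).indicator (fun _ => (1:ℝ)) p.1.1 * K (p.1.2, p.2))
    (((measurable_const.indicator (measurableSet_singleton d.1)).comp
      (measurable_fst.comp measurable_fst)).mul
      (hK.comp ((measurable_snd.comp measurable_fst).prodMk measurable_snd)))
  simp only [ind_evD]
  simpa only [mul_assoc] using this

/-- Theorem 1, case 3: the robust estimand identifies the PDATT when the missing-data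
and outcome models are correctly specified (the propensity-score models are arbitrary). -/
theorem statement_6
    [MeasurableSpace Ω] [m𝓧 : MeasurableSpace 𝓧]
    (P : Measure Ω) [IsProbabilityMeasure P]
    (X : Ω → 𝓧) (hX : Measurable X)
    (Y0 Y2 D1 D2 S : Ω → ℝ)
    (hY0 : Measurable Y0) (hY2 : Measurable Y2)
    (hD1 : Measurable D1) (hD2 : Measurable D2) (hS : Measurable S)
    (hY0i : Integrable Y0 P) (hY2i : Integrable Y2 P)
    (hD1v : ∀ ω, D1 ω = 0 ∨ D1 ω = 1) (hD2v : ∀ ω, D2 ω = 0 ∨ D2 ω = 1)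
    (hSv : ∀ ω, S ω = 0 ∨ S ω = 1)
    (Y0p Y2p : ℝ × ℝ → Ω → ℝ)
    (hY0p : ∀ e ∈ allPaths, Measurable (Y0p e) ∧ Integrable (Y0p e) P)
    (hY2p : ∀ e ∈ allPaths, Measurable (Y2p e) ∧ Integrable (Y2p e) P)
    (hcons0 : ∀ ω, Y0 ω = Y0p (D1 ω, D2 ω) ω)
    (hcons2 : ∀ ω, Y2 ω = Y2p (D1 ω, D2 ω) ω)
    (d : ℝ × ℝ) (hd : d ∈ threePaths)
    (hDIDd : DID P X D1 D2 Y0p Y2p d) (hDIDd' : DID P X D1 D2 Y0p Y2p (0, 0))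
    (q : ℝ → 𝓧 → ℝ) (hMAR : MAR P X D1 D2 S Y0 Y2 q)
    (pd pd' : 𝓧 → ℝ)
    (hpd : IsCondMeanGiven P X Set.univ (ind (evD D1 D2 d)) pd)
    (hpd' : IsCondMeanGiven P X Set.univ (ind (evD D1 D2 (0, 0))) pd')
    (hpdpos : ∀ᵐ ω ∂P, 0 < pd (X ω)) (hpd'pos : ∀ᵐ ω ∂P, 0 < pd' (X ω))
    (μd μd' πc πc' π2 π0 φ2 φ0 : 𝓧 → ℝ)
    (hμdm : Measurable μd) (hμd'm : Measurable μd')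
    (hμdi : Integrable (fun ω => μd (X ω)) P) (hμd'i : Integrable (fun ω => μd' (X ω)) P)
    (hπcm : Measurable πc) (hπc'm : Measurable πc')
    (hπ2m : Measurable π2) (hπ0m : Measurable π0)
    (hπcv : ∀ x, 0 < πc x ∧ πc x < 1) (hπc'v : ∀ x, 0 < πc' x ∧ πc' x < 1)
    (hπ2v : ∀ x, 0 < π2 x ∧ π2 x < 1) (hπ0v : ∀ x, 0 < π0 x ∧ π0 x < 1)
    (hφ2m : Measurable φ2) (hφ0m : Measurable φ0)
    (hφ2v : ∀ x, 0 < φ2 x ∧ φ2 x ≤ 1) (hφ0v : ∀ x, 0 < φ0 x ∧ φ0 x ≤ 1)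
    (hn1i : Integrable (n1 X D1 D2 S φ2 d) P)
    (hn1pos : 0 < ∫ ω, n1 X D1 D2 S φ2 d ω ∂P)
    (hn2i : Integrable (n2 X D1 D2 S φ0 πc πc' π2 π0) P)
    (hn2pos : 0 < ∫ ω, n2 X D1 D2 S φ0 πc πc' π2 π0 ω ∂P)
    (hn3i : Integrable (n3 X D2 πc d.2) P)
    (hn3pos : 0 < ∫ ω, n3 X D2 πc d.2 ω ∂P)
    (hn4i : Integrable (n4 X D2 S φ2 πc d.2) P)
    (hn4pos : 0 < ∫ ω, n4 X D2 S φ2 πc d.2 ω ∂P)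
    (hint1 : Integrable (fun ω =>
        (n1 X D1 D2 S φ2 d ω / ∫ ω', n1 X D1 D2 S φ2 d ω' ∂P
          - n2 X D1 D2 S φ0 πc πc' π2 π0 ω / ∫ ω', n2 X D1 D2 S φ0 πc πc' π2 π0 ω' ∂P)
        * (Y2 ω - Y0 ω - μd' (X ω))) P)
    (hint2 : Integrable (fun ω =>
        (n3 X D2 πc d.2 ω / ∫ ω', n3 X D2 πc d.2 ω' ∂P
          - n4 X D2 S φ2 πc d.2 ω / ∫ ω', n4 X D2 S φ2 πc d.2 ω' ∂P)
        * (μd (X ω) - μd' (X ω))) P)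
    (hφ2_corr : ∀ᵐ ω ∂P, φ2 (X ω) = q d.2 (X ω))
    (hφ0_corr : ∀ᵐ ω ∂P, φ0 (X ω) = q 0 (X ω))
    (hμd_corr : IsCondMeanGiven P X (evD D1 D2 d) (fun ω => Y2 ω - Y0 ω) μd)
    (hμd'_corr : IsCondMeanGiven P X (evD D1 D2 (0, 0)) (fun ω => Y2 ω - Y0 ω) μd')
    :
    tauR P X D1 D2 S Y0 Y2 d μd μd' πc πc' π2 π0 φ2 φ0 = tau P D1 D2 Y2p d := by
  have hd2 : d.2 ∈ ({0, 1} : Set ℝ) := by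
    rcases hd with h | h | h <;> rw [h] <;> simp
  have hd0 : d ≠ (0, 0) := by
    rcases hd with h | h | h <;> rw [h] <;> simp
  have hdall : d ∈ allPaths := by
    rcases hd with h | h | h <;> rw [h] <;> simp [allPaths]
  have h0all : ((0, 0) : ℝ × ℝ) ∈ allPaths := by simp [allPaths]
  have hAm : ∀ e : ℝ × ℝ, MeasurableSet (evD D1 D2 e) := fun e =>
    (hD1 (measurableSet_singleton e.1)).inter (hD2 (measurableSet_singleton e.2))
  have hA2m : MeasurableSet (evD2 D2 d.2) := hD2 (measurableSet_singleton _)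
  have hΔi : Integrable (fun ω => Y2 ω - Y0 ω) P := hY2i.sub hY0i
  have hΔm : Measurable (fun ω => Y2 ω - Y0 ω) := hY2.sub hY0
  have hKm : Measurable fun p : ℝ × 𝓧 => p.1 - μd' p.2 :=
    measurable_fst.sub (hμd'm.comp measurable_snd)
  -- consistency on the events
  have hcons : ∀ e : ℝ × ℝ, ∀ ω, ind (evD D1 D2 e) ω * (Y2 ω - Y0 ω)
      = ind (evD D1 D2 e) ω * (Y2p e ω - Y0p e ω) := by
    intro e ω
    by_cases h : ω ∈ evD D1 D2 e
    · have he : (D1 ω, D2 ω) = e := Prod.ext h.1 h.2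
      rw [hcons0, hcons2, he]
    · simp [ind, h]
  -- first weight
  have hN1 : ∫ ω, n1 X D1 D2 S φ2 d ω ∂P = (P (evD D1 D2 d)).toReal := by
    have := mar_path hX hY0 hY2 hD1 hD2 hS hSv hMAR hd2 hφ2m hφ2v hφ2_corr
      (fun _ => 1) measurable_const
    simp only [mul_one] at this
    unfold n1
    rw [this]
    simp only [ind]
    rw [integral_indicator (hAm d)]
    simp [Measure.real]
  have hT1 : ∫ ω, n1 X D1 D2 S φ2 d ω * (Y2 ω - Y0 ω - μd' (X ω)) ∂P
      = ∫ ω, ind (evD D1 D2 d) ω * (Y2 ω - Y0 ω - μd' (X ω)) ∂P :=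
    mar_path hX hY0 hY2 hD1 hD2 hS hSv hMAR hd2 hφ2m hφ2v hφ2_corr
      (fun p => p.1 - μd' p.2) hKm
  -- second weight
  have hT2 : ∫ ω, n2 X D1 D2 S φ0 πc πc' π2 π0 ω * (Y2 ω - Y0 ω - μd' (X ω)) ∂P = 0 := by
    have hrm : Measurable fun x => πc x * π2 x / (πc' x * π0 x) :=
      (hπcm.mul hπ2m).div (hπc'm.mul hπ0m)
    have := mar_path (d := (0, 0)) hX hY0 hY2 hD1 hD2 hS hSv hMAR (by simp) hφ0m hφ0v hφ0_corr
      (fun p => (p.1 - μd' p.2) * (πc p.2 * π2 p.2 / (πc' p.2 * π0 p.2)))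
      (hKm.mul (hrm.comp measurable_snd))
    have e : ∀ ω, n2 X D1 D2 S φ0 πc πc' π2 π0 ω * (Y2 ω - Y0 ω - μd' (X ω))
        = S ω / φ0 (X ω) * ind (evD D1 D2 (0, 0)) ω * ((Y2 ω - Y0 ω - μd' (X ω)) *
          (πc (X ω) * π2 (X ω) / (πc' (X ω) * π0 (X ω)))) := by
      intro ω
      unfold n2
      ring
    simp only [e]
    rw [this]
    simp only [← mul_assoc (ind _ _)]
    refine orth_ext (W := fun ω => ind (evD D1 D2 (0, 0)) ω * (Y2 ω - Y0 ω - μd' (X ω)))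
      hX ?_ hrm
    intro h hh hb
    obtain ⟨C, hC⟩ := hb
    have hhX : AEStronglyMeasurable (fun ω => h (X ω)) P := (hh.comp hX).aestronglyMeasurable
    have j1 := (ind_int (hAm (0, 0)) hΔi).mul_bdd (c := C) hhX
      (Filter.Eventually.of_forall fun ω => hC (X ω))
    have j2 := (ind_int (hAm (0, 0)) hμd'i).mul_bdd (c := C) hhX
      (Filter.Eventually.of_forall fun ω => hC (X ω))
    have e3 := integral_sub j1 j2
    rw [hμd'_corr.2 h hh ⟨C, hC⟩, sub_self] at e3
    refine Eq.trans ?_ e3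
    congr 1
    funext ω
    ring
  -- split the first integral
  have hdisj : ∀ ω, n1 X D1 D2 S φ2 d ω * n2 X D1 D2 S φ0 πc πc' π2 π0 ω = 0 := by
    intro ω
    have : ind (evD D1 D2 d) ω * ind (evD D1 D2 (0, 0)) ω = 0 := by
      by_cases h1 : ω ∈ evD D1 D2 d
      · by_cases h2 : ω ∈ evD D1 D2 (0, 0)
        · exact absurd (Prod.ext (h1.1.symm.trans h2.1) (h1.2.symm.trans h2.2)) hd0
        · simp [ind, h2]
      · simp [ind, h1]
    unfold n1 n2
    linear_combination (S ω / φ2 (X ω)) * (S ω / φ0 (X ω) *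
      (πc (X ω) * π2 (X ω) / (πc' (X ω) * π0 (X ω)))) * this
  set N1 := ∫ ω, n1 X D1 D2 S φ2 d ω ∂P with hN1def
  set N2 := ∫ ω, n2 X D1 D2 S φ0 πc πc' π2 π0 ω ∂P with hN2def
  have hi1 : Integrable (fun ω => n1 X D1 D2 S φ2 d ω / N1 * (Y2 ω - Y0 ω - μd' (X ω))) P := by
    refine hint1.mono ((hn1i.div_const N1).1.mul
      (hΔi.sub hμd'i).1) (Filter.Eventually.of_forall fun ω => ?_)
    rcases mul_eq_zero.1 (hdisj ω) with h | h
    · simp only [h, zero_div, zero_mul, norm_zero]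
      exact norm_nonneg _
    · simp [h]
  have hi2 : Integrable (fun ω => n2 X D1 D2 S φ0 πc πc' π2 π0 ω / N2
      * (Y2 ω - Y0 ω - μd' (X ω))) P := by
    refine (hi1.sub hint1).congr (Filter.Eventually.of_forall fun ω => ?_)
    simp only [Pi.sub_apply]
    ring
  have hfirst : ∫ ω, (n1 X D1 D2 S φ2 d ω / N1 - n2 X D1 D2 S φ0 πc πc' π2 π0 ω / N2)
      * (Y2 ω - Y0 ω - μd' (X ω)) ∂P
      = N1⁻¹ * ∫ ω, ind (evD D1 D2 d) ω * (Y2 ω - Y0 ω - μd' (X ω)) ∂P := by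
    simp only [sub_mul]
    rw [integral_sub hi1 hi2]
    have e1 : ∀ ω, n1 X D1 D2 S φ2 d ω / N1 * (Y2 ω - Y0 ω - μd' (X ω))
        = N1⁻¹ * (n1 X D1 D2 S φ2 d ω * (Y2 ω - Y0 ω - μd' (X ω))) := fun ω => by ring
    have e2 : ∀ ω, n2 X D1 D2 S φ0 πc πc' π2 π0 ω / N2 * (Y2 ω - Y0 ω - μd' (X ω))
        = N2⁻¹ * (n2 X D1 D2 S φ0 πc πc' π2 π0 ω * (Y2 ω - Y0 ω - μd' (X ω))) := fun ω => by ring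
    simp only [e1, e2]
    rw [integral_const_mul, integral_const_mul, hT1, hT2, mul_zero, sub_zero]
  -- second integral
  have h34 : ∀ k : 𝓧 → ℝ, Measurable k → ∫ ω, n4 X D2 S φ2 πc d.2 ω * k (X ω) ∂P
      = ∫ ω, n3 X D2 πc d.2 ω * k (X ω) ∂P := by
    intro k hk
    have := mar_ext hX hY0 hY2 hD1 hD2 hS hSv hMAR hd2 hφ2m hφ2v hφ2_corr
      (fun p => πc p.2 * k p.2) ((hπcm.mul hk).comp measurable_snd)
    unfold n3 n4
    convert this using 2 <;> · funext ω; ring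
  have hN34 : ∫ ω, n4 X D2 S φ2 πc d.2 ω ∂P = ∫ ω, n3 X D2 πc d.2 ω ∂P := by
    simpa using h34 (fun _ => 1) measurable_const
  have hsecond : ∫ ω, (n3 X D2 πc d.2 ω / ∫ ω', n3 X D2 πc d.2 ω' ∂P
        - n4 X D2 S φ2 πc d.2 ω / ∫ ω', n4 X D2 S φ2 πc d.2 ω' ∂P)
      * (μd (X ω) - μd' (X ω)) ∂P = 0 := by
    rw [hN34] at hint2 ⊢
    set N3 := ∫ ω, n3 X D2 πc d.2 ω ∂P with hN3def
    have hi3 : Integrable (fun ω => n3 X D2 πc d.2 ω / N3 * (μd (X ω) - μd' (X ω))) P := by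
      refine (hμdi.sub hμd'i).bdd_mul (c := 1 / N3) (hn3i.div_const N3).1
        (Filter.Eventually.of_forall fun ω => ?_)
      have h1 := ind_bd (evD2 D2 d.2) ω
      have h2 := hπcv (X ω)
      have h3 : 0 ≤ n3 X D2 πc d.2 ω := mul_nonneg h2.1.le h1.1
      have h4 : n3 X D2 πc d.2 ω ≤ 1 := by
        unfold n3
        nlinarith [h1.1, h1.2, h2.1, h2.2]
      rw [Real.norm_eq_abs, abs_of_nonneg (div_nonneg h3 hn3pos.le)]
      gcongr
    have hi4 : Integrable (fun ω => n4 X D2 S φ2 πc d.2 ω / N3 * (μd (X ω) - μd' (X ω))) P := by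
      refine (hi3.sub hint2).congr (Filter.Eventually.of_forall fun ω => ?_)
      simp only [Pi.sub_apply]
      ring
    simp only [sub_mul _ _ (_ - _)]
    rw [integral_sub hi3 hi4]
    have e1 : ∀ ω, n3 X D2 πc d.2 ω / N3 * (μd (X ω) - μd' (X ω))
        = N3⁻¹ * (n3 X D2 πc d.2 ω * (μd (X ω) - μd' (X ω))) := fun ω => by ring
    have e2 : ∀ ω, n4 X D2 S φ2 πc d.2 ω / N3 * (μd (X ω) - μd' (X ω))
        = N3⁻¹ * (n4 X D2 S φ2 πc d.2 ω * (μd (X ω) - μd' (X ω))) := fun ω => by ring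
    simp only [e1, e2]
    rw [integral_const_mul, integral_const_mul, h34 (fun x => μd x - μd' x) (hμdm.sub hμd'm),
      sub_self]
  -- identification of the counterfactual trend
  have hZi : Integrable (fun ω => Y2p (0, 0) ω - Y0p (0, 0) ω) P :=
    (hY2p _ h0all).2.sub (hY0p _ h0all).2
  obtain ⟨hNA, tr, htr1, htr2⟩ := hDIDd
  obtain ⟨-, tr', htr1', htr2'⟩ := hDIDd'
  have iu : ∀ (f : Ω → ℝ), (fun ω => ind univ ω * f ω) = f := by
    intro f
    funext ω
    simp [ind]
  have it := cm_int hX MeasurableSet.univ hZi htr1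
  have it' := cm_int hX MeasurableSet.univ hZi htr1'
  have hu := cm_unique (fun _ => rfl) htr1 htr1' hX it it'
  have itX : Integrable (fun ω => tr (X ω)) P := by rwa [iu] at it
  have itX' : Integrable (fun ω => tr' (X ω)) P := by rwa [iu] at it'
  have hu' := cm_unique (fun ω => (hcons (0, 0) ω).symm) htr2' hμd'_corr hX
    (ind_int (hAm _) itX') (ind_int (hAm _) hμd'i)
  have ipd := cm_int hX MeasurableSet.univ
    (Z := ind (evD D1 D2 (0, 0))) ((integrable_const (1:ℝ)).indicator (hAm _)) hpd'
  have ipdX : Integrable (fun ω => pd' (X ω)) P := by rwa [iu] at ipd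
  have hae : ∀ᵐ ω ∂P, tr' (X ω) = μd' (X ω) := by
    set B : Set 𝓧 := {x | tr' x ≠ μd' x} with hBdef
    have hBm : MeasurableSet B := (measurableSet_eq_fun htr1'.1 hμd'm).compl
    have hb01 : ∀ x, 0 ≤ B.indicator (fun _ => (1:ℝ)) x ∧ B.indicator (fun _ => (1:ℝ)) x ≤ 1 :=
      fun x => ind_bd B x
    have hbm : Measurable (B.indicator fun _ => (1:ℝ)) := measurable_const.indicator hBm
    have hb1 : ∀ x, |B.indicator (fun _ => (1:ℝ)) x| ≤ 1 := fun x => by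
      rw [abs_of_nonneg (hb01 x).1]; exact (hb01 x).2
    have e := hpd'.2 _ hbm ⟨1, hb1⟩
    have z : ∫ ω, ind univ ω * ind (evD D1 D2 (0, 0)) ω
        * B.indicator (fun _ => (1:ℝ)) (X ω) ∂P = 0 := by
      rw [integral_eq_zero_of_ae]
      filter_upwards [hu'] with ω h
      rcases mul_eq_zero.1 h with h | h
      · simp [h]
      · have : X ω ∉ B := fun hB => hB (sub_eq_zero.1 (abs_eq_zero.1 h))
        simp [this]
    rw [z] at e
    have iu2 : ∀ ω : Ω, ind univ ω = 1 := fun ω => by simp [ind]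
    simp only [iu2, one_mul] at e
    have j := ipdX.mul_bdd (c := 1) (hbm.comp hX).aestronglyMeasurable
      (Filter.Eventually.of_forall fun ω => hb1 (X ω))
    have z2 := (integral_eq_zero_iff_of_nonneg_ae
      (by filter_upwards [hpd'pos] with ω h using mul_nonneg h.le (hb01 _).1) j).1 e.symm
    filter_upwards [z2, hpd'pos] with ω h1 h2
    by_contra hne
    have : X ω ∈ B := hne
    simp [this] at h1
    exact h2.ne' h1
  have hcf : ∫ ω, ind (evD D1 D2 d) ω * μd' (X ω) ∂P
      = ∫ ω, ind (evD D1 D2 d) ω * (Y2p (0, 0) ω - Y0p (0, 0) ω) ∂P := by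
    have e := htr2.2 (fun _ => 1) measurable_const ⟨1, fun _ => by simp⟩
    simp only [mul_one] at e
    rw [e]
    apply integral_congr_ae
    filter_upwards [hae, hu] with ω h1 h2
    have : tr (X ω) = tr' (X ω) := by
      simpa [ind, sub_eq_zero] using h2
    rw [this, h1]
  have hNA1 := hNA (fun _ => 1) measurable_const ⟨1, fun _ => by simp⟩
  simp only [mul_one] at hNA1
  have hfin : ∫ ω, ind (evD D1 D2 d) ω * (Y2 ω - Y0 ω - μd' (X ω)) ∂P
      = ∫ ω in evD D1 D2 d, (Y2p d ω - Y2p (0, 0) ω) ∂P := by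
    have a1 := ind_int (hAm d) (hY2p d hdall).2
    have a2 := ind_int (hAm d) (hY2p _ h0all).2
    have a3 := ind_int (hAm d) (hY0p d hdall).2
    have a4 := ind_int (hAm d) (hY0p _ h0all).2
    have a5 := ind_int (hAm d) hμd'i
    have a6 := ind_int (hAm d) hΔi
    simp only [mul_sub] at hcf ⊢
    simp only [← mul_sub (ind _ _) (Y2 _)]
    rw [integral_sub a6 a5, hcf]
    simp only [hcons d]
    simp only [mul_sub]
    rw [integral_sub a1 a3, integral_sub a2 a4, ← integral_indicator (hAm d)]
    have e : ∀ ω, (evD D1 D2 d).indicator (fun ω => Y2p d ω - Y2p (0, 0) ω) ω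
        = ind (evD D1 D2 d) ω * Y2p d ω - ind (evD D1 D2 d) ω * Y2p (0, 0) ω := by
      intro ω
      by_cases h : ω ∈ evD D1 D2 d <;> simp [ind, h]
    simp only [e]
    rw [integral_sub a1 a2]
    linarith
  unfold tauR tau
  rw [← hN1def, ← hN2def, hfirst, hsecond, hfin, hN1, add_zero]

end DIDMissing
end
end

section
/- (Proposition 3, doubly robust estimand.) Fix d in {(1,1),(0,1),(1,0)} and d' = (0,0). Suppose Assumption DID holds for d and for d', Assumption MAR holds, P(D = d | X) > 0 and P(D = d' | X) > 0 a.s., the denominators of the weights w1 and w2 are finite and strictly positive, all displayed expectations are finite, and φ_{d2}(X) = q_{d2}(X) and φ_0(X) = q_0(X) a.s. If, in addition, either (a) μ_{d'}(X) = m_{d'}(X) a.s., or (b) π_{d1|d2}(X) = p_{d1|d2}(X), π_{d2}(X) = p_{d2}(X), π_{0|0}(X) = p_{0|0}(X), and π_0(X) = p_0(X) a.s., then the missingness-adjusted doubly robust estimand τ^{DR}_{dd'} = E[(w1 − w2) · (ΔY − μ_{d'}(X))] equals τ_{dd'}. -/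
open MeasureTheory Set
open scoped Classical

noncomputable section

namespace DIDMissing

variable {Ω : Type*} {𝓧 : Type*}

lemma aux_transfer [MeasurableSpace Ω] {E : Type*} [mE : MeasurableSpace E] (P : Measure Ω)
    (T : Ω → E) (hT : Measurable T) (U V : Ω → ℝ)
    (hU : Measurable U) (hV : Measurable V) (hUi : Integrable U P) (hVi : Integrable V P)
    (hU0 : 0 ≤ᵐ[P] U) (hV0 : 0 ≤ᵐ[P] V) (C : Set (Set E))
    (hC : mE = MeasurableSpace.generateFrom C) (hpi : IsPiSystem C) (hu : Set.univ ∈ C)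
    (h : ∀ s ∈ C, ∫ ω, U ω * s.indicator (fun _ => (1 : ℝ)) (T ω) ∂P
        = ∫ ω, V ω * s.indicator (fun _ => (1 : ℝ)) (T ω) ∂P)
    (F : E → ℝ) (hF : Measurable F) :
    (Integrable (fun ω => U ω * F (T ω)) P ↔ Integrable (fun ω => V ω * F (T ω)) P) ∧
    ∫ ω, U ω * F (T ω) ∂P = ∫ ω, V ω * F (T ω) ∂P := by
  have key : ∀ W : Ω → ℝ, Measurable W → Integrable W P → 0 ≤ᵐ[P] W → ∀ s : Set E,
      MeasurableSet s → ((P.withDensity fun ω => ENNReal.ofReal (W ω)).map T) s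
        = ENNReal.ofReal (∫ ω, W ω * s.indicator (fun _ => (1 : ℝ)) (T ω) ∂P) := by
    intro W hW hWi hW0 s hs
    rw [Measure.map_apply hT hs, withDensity_apply _ (hT hs)]
    have e : ∀ ω, W ω * s.indicator (fun _ => (1 : ℝ)) (T ω) = (T ⁻¹' s).indicator W ω := by
      intro ω
      by_cases hω : T ω ∈ s
      · simp [hω]
      · simp [hω]
    simp_rw [e]
    rw [integral_indicator (hT hs), ofReal_integral_eq_lintegral_ofReal hWi.integrableOn
      (ae_restrict_of_ae hW0)]
  have hsC : ∀ s ∈ C, MeasurableSet s := by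
    intro s hs
    rw [hC]
    exact MeasurableSpace.measurableSet_generateFrom hs
  have hfin : ∀ W : Ω → ℝ, Measurable W → Integrable W P → 0 ≤ᵐ[P] W →
      IsFiniteMeasure ((P.withDensity fun ω => ENNReal.ofReal (W ω)).map T) := by
    intro W hW hWi hW0
    refine ⟨?_⟩
    rw [key W hW hWi hW0 _ MeasurableSet.univ]
    exact ENNReal.ofReal_lt_top
  have := hfin U hU hUi hU0
  have hm : (P.withDensity fun ω => ENNReal.ofReal (U ω)).map T
      = (P.withDensity fun ω => ENNReal.ofReal (V ω)).map T := by
    refine ext_of_generate_finite C hC hpi ?_ ?_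
    · intro s hs
      rw [key U hU hUi hU0 s (hsC s hs), key V hV hVi hV0 s (hsC s hs), h s hs]
    · rw [key U hU hUi hU0 _ MeasurableSet.univ, key V hV hVi hV0 _ MeasurableSet.univ, h _ hu]
  have i1 : ∀ W : Ω → ℝ, Measurable W → 0 ≤ᵐ[P] W →
      (Integrable F ((P.withDensity fun ω => ENNReal.ofReal (W ω)).map T) ↔
        Integrable (fun ω => W ω * F (T ω)) P) ∧
      ∫ e, F e ∂((P.withDensity fun ω => ENNReal.ofReal (W ω)).map T)
        = ∫ ω, W ω * F (T ω) ∂P := by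
    intro W hW hW0
    have hae : (fun ω => (ENNReal.ofReal (W ω)).toReal • F (T ω)) =ᵐ[P]
        fun ω => W ω * F (T ω) := by
      filter_upwards [hW0] with ω hω
      simp only [smul_eq_mul]
      rw [ENNReal.toReal_ofReal hω]
    constructor
    · rw [integrable_map_measure hF.aestronglyMeasurable hT.aemeasurable,
        integrable_withDensity_iff_integrable_smul' hW.ennreal_ofReal
          (Filter.Eventually.of_forall fun _ => ENNReal.ofReal_lt_top)]
      exact integrable_congr hae
    · rw [integral_map hT.aemeasurable hF.aestronglyMeasurable,
        integral_withDensity_eq_integral_toReal_smul hW.ennreal_ofReal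
          (Filter.Eventually.of_forall fun _ => ENNReal.ofReal_lt_top)]
      exact integral_congr_ae hae
  refine ⟨?_, ?_⟩
  · rw [← (i1 U hU hU0).1, ← (i1 V hV hV0).1, hm]
  · rw [← (i1 U hU hU0).2, ← (i1 V hV hV0).2, hm]

lemma ind_nonneg (A : Set Ω) (ω : Ω) : 0 ≤ ind A ω := by
  unfold ind; by_cases h : ω ∈ A <;> simp [h]

lemma ind_le (A : Set Ω) (ω : Ω) : ind A ω ≤ 1 := by
  unfold ind; by_cases h : ω ∈ A <;> simp [h]

lemma ind_abs (A : Set Ω) (ω : Ω) : |ind A ω| ≤ 1 := by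
  rw [abs_of_nonneg (ind_nonneg A ω)]; exact ind_le A ω

lemma ind_univ (ω : Ω) : ind (Set.univ : Set Ω) ω = 1 := by simp [ind]

lemma ind_mul_integrable [MeasurableSpace Ω] {P : Measure Ω} {A : Set Ω} (hA : MeasurableSet A)
    {Z : Ω → ℝ} (hZ : Integrable Z P) : Integrable (fun ω => ind A ω * Z ω) P :=
  hZ.bdd_mul (c := 1) (ind_meas hA).aestronglyMeasurable
    (Filter.Eventually.of_forall fun ω => ind_abs A ω)

lemma aux_transfer_X [MeasurableSpace Ω] [MeasurableSpace 𝓧] (P : Measure Ω)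
    (X : Ω → 𝓧) (hX : Measurable X) (U V : Ω → ℝ)
    (hU : Measurable U) (hV : Measurable V) (hUi : Integrable U P) (hVi : Integrable V P)
    (hU0 : 0 ≤ᵐ[P] U) (hV0 : 0 ≤ᵐ[P] V)
    (h : ∀ h : 𝓧 → ℝ, Measurable h → (∃ C, ∀ x, |h x| ≤ C) →
      ∫ ω, U ω * h (X ω) ∂P = ∫ ω, V ω * h (X ω) ∂P)
    (F : 𝓧 → ℝ) (hF : Measurable F) :
    (Integrable (fun ω => U ω * F (X ω)) P ↔ Integrable (fun ω => V ω * F (X ω)) P) ∧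
    ∫ ω, U ω * F (X ω) ∂P = ∫ ω, V ω * F (X ω) ∂P := by
  refine aux_transfer P X hX U V hU hV hUi hVi hU0 hV0 {s | MeasurableSet s}
    MeasurableSpace.generateFrom_measurableSet.symm MeasurableSpace.isPiSystem_measurableSet
    MeasurableSet.univ ?_ F hF
  intro s hs
  exact h _ (measurable_const.indicator hs) ⟨1, fun x => ind_abs s x⟩

/-- transfer under MAR -/
lemma aux_mar [MeasurableSpace Ω] [MeasurableSpace 𝓧] (P : Measure Ω) [IsProbabilityMeasure P]
    (X : Ω → 𝓧) (hX : Measurable X)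
    (Y0 Y2 D1 D2 S : Ω → ℝ)
    (hY0 : Measurable Y0) (hY2 : Measurable Y2)
    (hD1 : Measurable D1) (hD2 : Measurable D2) (hS : Measurable S)
    (hSv : ∀ ω, S ω = 0 ∨ S ω = 1)
    (q : ℝ → 𝓧 → ℝ) (hMAR : MAR P X D1 D2 S Y0 Y2 q) (d2 : ℝ) (hd2 : d2 ∈ ({0, 1} : Set ℝ))
    (F : (ℝ × ℝ) × 𝓧 → ℝ) (hF : Measurable F) :
    (Integrable (fun ω => ind (evD2 D2 d2) ω * S ω * F ((D1 ω, Y2 ω - Y0 ω), X ω)) P ↔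
      Integrable (fun ω => ind (evD2 D2 d2) ω * q d2 (X ω) * F ((D1 ω, Y2 ω - Y0 ω), X ω)) P) ∧
    ∫ ω, ind (evD2 D2 d2) ω * S ω * F ((D1 ω, Y2 ω - Y0 ω), X ω) ∂P
      = ∫ ω, ind (evD2 D2 d2) ω * q d2 (X ω) * F ((D1 ω, Y2 ω - Y0 ω), X ω) ∂P := by
  obtain ⟨h1, h2, h3⟩ := hMAR
  have hqm := (h1 d2 hd2).1
  have hq := h2 d2 hd2
  have hA : MeasurableSet (evD2 D2 d2) := hD2 (measurableSet_singleton d2)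
  have hSi : Integrable S P := by
    refine Integrable.of_bound hS.aestronglyMeasurable 1 (Filter.Eventually.of_forall fun ω => ?_)
    rcases hSv ω with h | h <;> simp [h]
  have hqi : Integrable (fun ω => q d2 (X ω)) P := by
    refine Integrable.of_bound (hqm.comp hX).aestronglyMeasurable 1 ?_
    filter_upwards [hq] with ω hω
    rw [Real.norm_eq_abs, abs_of_pos hω.1]; exact hω.2
  refine aux_transfer P (fun ω => ((D1 ω, Y2 ω - Y0 ω), X ω)) (by fun_prop)
    (fun ω => ind (evD2 D2 d2) ω * S ω) (fun ω => ind (evD2 D2 d2) ω * q d2 (X ω))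
    ((ind_meas hA).mul hS) ((ind_meas hA).mul (hqm.comp hX))
    (ind_mul_integrable hA hSi) (ind_mul_integrable hA hqi) ?_ ?_
    (Set.image2 (fun s t => s ×ˢ t) {s : Set (ℝ × ℝ) | MeasurableSet s}
      {t : Set 𝓧 | MeasurableSet t}) generateFrom_prod.symm isPiSystem_prod
    (Set.mem_image2.2 ⟨Set.univ, by simp, Set.univ, by simp, by simp⟩) ?_ F hF
  · refine Filter.Eventually.of_forall fun ω => mul_nonneg (ind_nonneg _ _) ?_
    rcases hSv ω with h | h <;> simp [h]
  · filter_upwards [hq] with ω hω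
    exact mul_nonneg (ind_nonneg _ _) hω.1.le
  · rintro _ ⟨s, hs, t, ht, rfl⟩
    have := h3 d2 hd2 (ind s) (ind_meas hs) ⟨1, ind_abs s⟩ (ind t) (ind_meas ht) ⟨1, ind_abs t⟩
    have e : ∀ ω, (s ×ˢ t).indicator (fun _ => (1 : ℝ)) ((D1 ω, Y2 ω - Y0 ω), X ω)
        = ind s (D1 ω, Y2 ω - Y0 ω) * ind t (X ω) := by
      intro ω
      by_cases h1 : (D1 ω, Y2 ω - Y0 ω) ∈ s <;> by_cases h2 : X ω ∈ t <;> simp [ind, h1, h2]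
    simp only [e, ← mul_assoc]
    exact this

lemma sign_meas : Measurable (fun x : ℝ => (SignType.sign x : ℝ)) := by
  have : (fun x : ℝ => (SignType.sign x : ℝ))
      = fun x => if 0 < x then 1 else if x < 0 then -1 else 0 := by
    funext x
    rw [sign_apply]
    split_ifs <;> simp
  rw [this]
  exact Measurable.ite measurableSet_Ioi measurable_const
    (Measurable.ite measurableSet_Iio measurable_const measurable_const)

lemma sign_abs_le (x : ℝ) : |(SignType.sign x : ℝ)| ≤ 1 := by
  rw [sign_apply]
  split_ifs <;> simp

lemma condMean_integrable [MeasurableSpace Ω] [MeasurableSpace 𝓧] {P : Measure Ω}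
    [IsProbabilityMeasure P] {X : Ω → 𝓧} (hX : Measurable X) {A : Set Ω} (hA : MeasurableSet A)
    {Z : Ω → ℝ} (hZ : Integrable Z P) {g : 𝓧 → ℝ} (hg : IsCondMeanGiven P X A Z g) :
    Integrable (fun ω => ind A ω * g (X ω)) P := by
  obtain ⟨hgm, h⟩ := hg
  have hs : ∀ n : ℕ, MeasurableSet {x | |g x| ≤ n} := fun n =>
    measurableSet_le hgm.abs measurable_const
  have hcov : AECover P Filter.atTop (fun n : ℕ => X ⁻¹' {x | |g x| ≤ n}) := by
    refine ⟨Filter.Eventually.of_forall fun ω => ?_, fun n => hX (hs n)⟩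
    obtain ⟨N, hN⟩ := exists_nat_ge |g (X ω)|
    filter_upwards [Filter.eventually_ge_atTop N] with n hn
    exact hN.trans (by exact_mod_cast hn)
  have hm : Measurable (fun ω => ind A ω * g (X ω)) := (ind_meas hA).mul (hgm.comp hX)
  refine hcov.integrable_of_integral_norm_bounded (∫ ω, |Z ω| ∂P) ?_ ?_
  · intro n
    refine Measure.integrableOn_of_bounded (M := n) (measure_ne_top _ _)
      hm.aestronglyMeasurable ?_
    filter_upwards [ae_restrict_mem (hX (hs n))] with ω hω
    have hω' : |g (X ω)| ≤ n := hω
    rw [Real.norm_eq_abs, abs_mul]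
    calc |ind A ω| * |g (X ω)| ≤ 1 * n := by
          gcongr
          exact ind_abs A ω
      _ = n := one_mul _
  · refine Filter.Eventually.of_forall fun n => ?_
    rw [← integral_indicator (hX (hs n))]
    have h1 := h (fun x => (SignType.sign (g x) : ℝ) * ind {x | |g x| ≤ n} x)
      ((sign_meas.comp hgm).mul (ind_meas (hs n))) ⟨1, fun x => by
        rw [abs_mul]
        exact mul_le_one₀ (sign_abs_le _) (abs_nonneg _) (ind_abs _ _)⟩
    have e : ∀ ω, (X ⁻¹' {x | |g x| ≤ n}).indicator (fun ω => ‖ind A ω * g (X ω)‖) ω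
        = ind A ω * g (X ω) * ((SignType.sign (g (X ω)) : ℝ) * ind {x | |g x| ≤ n} (X ω)) := by
      intro ω
      by_cases hω : |g (X ω)| ≤ n
      · have : ω ∈ X ⁻¹' {x | |g x| ≤ n} := hω
        rw [Set.indicator_of_mem this]
        have h2 : ind {x | |g x| ≤ n} (X ω) = 1 := Set.indicator_of_mem (s := {x | |g x| ≤ n}) hω _
        rw [h2, Real.norm_eq_abs, abs_mul, abs_of_nonneg (ind_nonneg _ _), mul_one, mul_assoc,
          self_mul_sign]
      · have : ω ∉ X ⁻¹' {x | |g x| ≤ n} := hω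
        rw [Set.indicator_of_notMem this]
        have h2 : ind {x | |g x| ≤ n} (X ω) = 0 :=
          Set.indicator_of_notMem (s := {x | |g x| ≤ n}) hω _
        rw [h2]; ring
    simp_rw [e]
    rw [← h1]
    refine (Real.le_norm_self _).trans ((norm_integral_le_integral_norm _).trans ?_)
    refine integral_mono_of_nonneg (Filter.Eventually.of_forall fun _ => norm_nonneg _) hZ.abs
      (Filter.Eventually.of_forall fun ω => ?_)
    simp only [Real.norm_eq_abs, abs_mul]
    have a1 := ind_abs A ω
    have a2 := sign_abs_le (g (X ω))
    have a3 := ind_abs {x | |g x| ≤ n} (X ω)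
    calc _ ≤ 1 * |Z ω| * (1 * 1) := by gcongr
      _ = |Z ω| := by ring

lemma condMean_unique [MeasurableSpace Ω] [MeasurableSpace 𝓧] {P : Measure Ω}
    [IsProbabilityMeasure P] {X : Ω → 𝓧} (hX : Measurable X) {A : Set Ω} (hA : MeasurableSet A)
    {Z : Ω → ℝ} (hZ : Integrable Z P) {g g' : 𝓧 → ℝ} (hg : IsCondMeanGiven P X A Z g)
    (hg' : IsCondMeanGiven P X A Z g') :
    ∀ᵐ ω ∂P, ind A ω * |g (X ω) - g' (X ω)| = 0 := by
  have i1 := condMean_integrable hX hA hZ hg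
  have i2 := condMean_integrable hX hA hZ hg'
  have hsm : Measurable (fun x => (SignType.sign (g x - g' x) : ℝ)) :=
    sign_meas.comp (hg.1.sub hg'.1)
  have hb : ∀ f : Ω → ℝ, Integrable f P →
      Integrable (fun ω => f ω * (SignType.sign (g (X ω) - g' (X ω)) : ℝ)) P := fun f hf =>
    hf.mul_bdd (c := 1) (hsm.comp hX).aestronglyMeasurable
      (Filter.Eventually.of_forall fun ω => sign_abs_le _)
  have e1 := hg.2 _ hsm ⟨1, fun x => sign_abs_le _⟩
  have e2 := hg'.2 _ hsm ⟨1, fun x => sign_abs_le _⟩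
  have e3 := e1.symm.trans e2
  have e4 : ∫ ω, ind A ω * |g (X ω) - g' (X ω)| ∂P = 0 := by
    rw [← sub_eq_zero, ← integral_sub (hb _ i1) (hb _ i2)] at e3
    rw [← e3]
    refine integral_congr_ae (Filter.Eventually.of_forall fun ω => ?_)
    simp only
    rw [← self_mul_sign (g (X ω) - g' (X ω))]; ring
  have hi : Integrable (fun ω => ind A ω * |g (X ω) - g' (X ω)|) P := by
    refine (i1.sub i2).abs.congr (Filter.Eventually.of_forall fun ω => ?_)
    simp only [Pi.sub_apply]
    rw [← mul_sub, abs_mul, abs_of_nonneg (ind_nonneg _ _)]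
  have := (integral_eq_zero_iff_of_nonneg
    (fun ω => mul_nonneg (ind_nonneg A ω) (abs_nonneg _)) hi).1 e4
  exact this

lemma aux_ortho [MeasurableSpace Ω] [MeasurableSpace 𝓧] {P : Measure Ω}
    [IsProbabilityMeasure P] {X : Ω → 𝓧} (hX : Measurable X)
    {W : Ω → ℝ} (hW : Integrable W P)
    (h : ∀ h : 𝓧 → ℝ, Measurable h → (∃ C, ∀ x, |h x| ≤ C) → ∫ ω, W ω * h (X ω) ∂P = 0)
    (g : 𝓧 → ℝ) (hg : Measurable g) (hi : Integrable (fun ω => W ω * g (X ω)) P) :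
    ∫ ω, W ω * g (X ω) ∂P = 0 := by
  have hs : ∀ n : ℕ, MeasurableSet {x | |g x| ≤ n} := fun n =>
    measurableSet_le hg.abs measurable_const
  have hcov : AECover P Filter.atTop (fun n : ℕ => X ⁻¹' {x | |g x| ≤ n}) := by
    refine ⟨Filter.Eventually.of_forall fun ω => ?_, fun n => hX (hs n)⟩
    obtain ⟨N, hN⟩ := exists_nat_ge |g (X ω)|
    filter_upwards [Filter.eventually_ge_atTop N] with n hn
    exact hN.trans (by exact_mod_cast hn)
  have ht := hcov.integral_tendsto_of_countably_generated hi
  have hz : ∀ n : ℕ, ∫ ω in X ⁻¹' {x | |g x| ≤ n}, W ω * g (X ω) ∂P = 0 := by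
    intro n
    rw [← integral_indicator (hX (hs n)), ← h ({x | |g x| ≤ n}.indicator g)
      (hg.indicator (hs n)) ⟨n, fun x => ?_⟩]
    · refine integral_congr_ae (Filter.Eventually.of_forall fun ω => ?_)
      by_cases hω : |g (X ω)| ≤ n
      · simp [Set.indicator, hω]
      · simp [Set.indicator, hω]
    · by_cases hx : |g x| ≤ n
      · simp [Set.indicator, hx]
      · simp [Set.indicator, hx]
  simp_rw [hz] at ht
  exact (tendsto_nhds_unique ht tendsto_const_nhds)

/-- product rule for propensity scores -/
lemma aux_prop [MeasurableSpace Ω] [MeasurableSpace 𝓧] (P : Measure Ω) [IsProbabilityMeasure P]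
    (X : Ω → 𝓧) (hX : Measurable X) (D1 D2 : Ω → ℝ) (hD1 : Measurable D1) (hD2 : Measurable D2)
    (d : ℝ × ℝ) (πc π2 : 𝓧 → ℝ)
    (hπcv : ∀ x, 0 < πc x ∧ πc x < 1) (hπ2v : ∀ x, 0 < π2 x ∧ π2 x < 1)
    (h1 : IsCondMeanGiven P X (evD2 D2 d.2) (ind {ω | D1 ω = d.1}) πc)
    (h2 : IsCondMeanGiven P X Set.univ (ind (evD2 D2 d.2)) π2)
    (F : 𝓧 → ℝ) (hF : Measurable F) :
    (Integrable (fun ω => ind (evD D1 D2 d) ω * F (X ω)) P ↔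
      Integrable (fun ω => πc (X ω) * π2 (X ω) * F (X ω)) P) ∧
    ∫ ω, ind (evD D1 D2 d) ω * F (X ω) ∂P = ∫ ω, πc (X ω) * π2 (X ω) * F (X ω) ∂P := by
  have hA : MeasurableSet (evD2 D2 d.2) := hD2 (measurableSet_singleton d.2)
  have hB : MeasurableSet {ω | D1 ω = d.1} := hD1 (measurableSet_singleton d.1)
  have hB' := ind_meas hB
  have hA' := ind_meas hA
  have hcm := h1.1.comp hX
  have h2m := h2.1.comp hX
  have hbi : ∀ f : Ω → ℝ, Measurable f → (∀ ω, 0 ≤ f ω ∧ f ω ≤ 1) → Integrable f P := by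
    intro f hf hb
    refine Integrable.of_bound hf.aestronglyMeasurable 1 (Filter.Eventually.of_forall fun ω => ?_)
    rw [Real.norm_eq_abs, abs_of_nonneg (hb ω).1]; exact (hb ω).2
  have ic := hbi _ hcm fun ω => ⟨(hπcv _).1.le, (hπcv _).2.le⟩
  have i2 := hbi _ h2m fun ω => ⟨(hπ2v _).1.le, (hπ2v _).2.le⟩
  have iA := hbi _ hA' fun ω => ⟨ind_nonneg _ _, ind_le _ _⟩
  have iB := hbi _ hB' fun ω => ⟨ind_nonneg _ _, ind_le _ _⟩
  have t1 := aux_transfer_X P X hX _ _ (hA'.mul hB') (hA'.mul hcm)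
    (ind_mul_integrable hA iB) (ind_mul_integrable hA ic)
    (Filter.Eventually.of_forall fun ω => mul_nonneg (ind_nonneg _ _) (ind_nonneg _ _))
    (Filter.Eventually.of_forall fun ω => mul_nonneg (ind_nonneg _ _) (hπcv _).1.le)
    h1.2 F hF
  have t2 := aux_transfer_X P X hX (ind (evD2 D2 d.2)) (fun ω => π2 (X ω)) hA' h2m iA i2
    (Filter.Eventually.of_forall fun ω => ind_nonneg _ _)
    (Filter.Eventually.of_forall fun ω => (hπ2v _).1.le)
    (by
      intro h hh hb
      have := h2.2 h hh hb
      simpa only [ind_univ, one_mul] using this) (fun x => πc x * F x) (h1.1.mul hF)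
  have e1 : (fun ω => ind (evD D1 D2 d) ω * F (X ω)) =
      fun ω => (ind (evD2 D2 d.2) * ind {ω | D1 ω = d.1}) ω * F (X ω) := by
    funext ω
    by_cases a : D1 ω = d.1 <;> by_cases b : D2 ω = d.2 <;> simp [ind, evD, evD2, a, b]
  have e2 : (fun ω => πc (X ω) * π2 (X ω) * F (X ω)) =
      fun ω => π2 (X ω) * (πc (X ω) * F (X ω)) := by funext ω; ring
  have e3 : (fun ω => (ind (evD2 D2 d.2) * πc ∘ X) ω * F (X ω)) =
      fun ω => ind (evD2 D2 d.2) ω * (πc (X ω) * F (X ω)) := by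
    funext ω; simp [mul_assoc]
  rw [e1, e2]
  rw [e3] at t1
  exact ⟨t1.1.trans t2.1, t1.2.trans t2.2⟩

/-- inverse missingness weighting -/
lemma aux_ipw [MeasurableSpace Ω] [MeasurableSpace 𝓧] (P : Measure Ω) [IsProbabilityMeasure P]
    (X : Ω → 𝓧) (hX : Measurable X)
    (Y0 Y2 D1 D2 S : Ω → ℝ)
    (hY0 : Measurable Y0) (hY2 : Measurable Y2)
    (hD1 : Measurable D1) (hD2 : Measurable D2) (hS : Measurable S)
    (hSv : ∀ ω, S ω = 0 ∨ S ω = 1)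
    (q : ℝ → 𝓧 → ℝ) (hMAR : MAR P X D1 D2 S Y0 Y2 q) (e : ℝ × ℝ) (he : e.2 ∈ ({0, 1} : Set ℝ))
    (φ : 𝓧 → ℝ) (hφ : Measurable φ) (hφv : ∀ x, 0 < φ x ∧ φ x ≤ 1)
    (hc : ∀ᵐ ω ∂P, φ (X ω) = q e.2 (X ω))
    (K : ℝ × 𝓧 → ℝ) (hK : Measurable K) :
    (Integrable (fun ω => S ω / φ (X ω) * ind (evD D1 D2 e) ω * K (Y2 ω - Y0 ω, X ω)) P ↔
      Integrable (fun ω => ind (evD D1 D2 e) ω * K (Y2 ω - Y0 ω, X ω)) P) ∧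
    ∫ ω, S ω / φ (X ω) * ind (evD D1 D2 e) ω * K (Y2 ω - Y0 ω, X ω) ∂P
      = ∫ ω, ind (evD D1 D2 e) ω * K (Y2 ω - Y0 ω, X ω) ∂P := by
  have hF : Measurable (fun p : (ℝ × ℝ) × 𝓧 =>
      ind ({e.1} : Set ℝ) p.1.1 / φ p.2 * K (p.1.2, p.2)) := by
    have := ind_meas (measurableSet_singleton e.1)
    fun_prop
  have t := aux_mar P X hX Y0 Y2 D1 D2 S hY0 hY2 hD1 hD2 hS hSv q hMAR e.2 he _ hF
  have i0 : ∀ ω, ind (evD D1 D2 e) ω = ind (evD2 D2 e.2) ω * ind ({e.1} : Set ℝ) (D1 ω) := by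
    intro ω
    by_cases a : D1 ω = e.1 <;> by_cases b : D2 ω = e.2 <;> simp [ind, evD, evD2, a, b]
  have e1 : (fun ω => S ω / φ (X ω) * ind (evD D1 D2 e) ω * K (Y2 ω - Y0 ω, X ω)) =
      fun ω => ind (evD2 D2 e.2) ω * S ω *
        (ind ({e.1} : Set ℝ) (D1 ω) / φ (X ω) * K (Y2 ω - Y0 ω, X ω)) := by
    funext ω
    rw [i0]; ring
  have e2 : (fun ω => ind (evD2 D2 e.2) ω * q e.2 (X ω) *
        (ind ({e.1} : Set ℝ) (D1 ω) / φ (X ω) * K (Y2 ω - Y0 ω, X ω))) =ᵐ[P]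
      (fun ω => ind (evD D1 D2 e) ω * K (Y2 ω - Y0 ω, X ω)) := by
    filter_upwards [hc] with ω hω
    rw [i0, ← hω]
    have := (hφv (X ω)).1.ne'
    field_simp
  rw [e1]
  exact ⟨t.1.trans (integrable_congr e2), t.2.trans (integral_congr_ae e2)⟩

/-- Proposition 3 (doubly robust estimand): with a correct missing-data model and either a
correct outcome model or a correct propensity-score model, the missingness-adjusted DR
estimand identifies the PDATT. -/
theorem statement_10
    [MeasurableSpace Ω] [m𝓧 : MeasurableSpace 𝓧]
    (P : Measure Ω) [IsProbabilityMeasure P]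
    (X : Ω → 𝓧) (hX : Measurable X)
    (Y0 Y2 D1 D2 S : Ω → ℝ)
    (hY0 : Measurable Y0) (hY2 : Measurable Y2)
    (hD1 : Measurable D1) (hD2 : Measurable D2) (hS : Measurable S)
    (hY0i : Integrable Y0 P) (hY2i : Integrable Y2 P)
    (hD1v : ∀ ω, D1 ω = 0 ∨ D1 ω = 1) (hD2v : ∀ ω, D2 ω = 0 ∨ D2 ω = 1)
    (hSv : ∀ ω, S ω = 0 ∨ S ω = 1)
    (Y0p Y2p : ℝ × ℝ → Ω → ℝ)
    (hY0p : ∀ e ∈ allPaths, Measurable (Y0p e) ∧ Integrable (Y0p e) P)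
    (hY2p : ∀ e ∈ allPaths, Measurable (Y2p e) ∧ Integrable (Y2p e) P)
    (hcons0 : ∀ ω, Y0 ω = Y0p (D1 ω, D2 ω) ω)
    (hcons2 : ∀ ω, Y2 ω = Y2p (D1 ω, D2 ω) ω)
    (d : ℝ × ℝ) (hd : d ∈ threePaths)
    (hDIDd : DID P X D1 D2 Y0p Y2p d) (hDIDd' : DID P X D1 D2 Y0p Y2p (0, 0))
    (q : ℝ → 𝓧 → ℝ) (hMAR : MAR P X D1 D2 S Y0 Y2 q)
    (pd pd' : 𝓧 → ℝ)
    (hpd : IsCondMeanGiven P X Set.univ (ind (evD D1 D2 d)) pd)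
    (hpd' : IsCondMeanGiven P X Set.univ (ind (evD D1 D2 (0, 0))) pd')
    (hpdpos : ∀ᵐ ω ∂P, 0 < pd (X ω)) (hpd'pos : ∀ᵐ ω ∂P, 0 < pd' (X ω))
    (μd' πc πc' π2 π0 φ2 φ0 : 𝓧 → ℝ)
    (hμd'm : Measurable μd') (hμd'i : Integrable (fun ω => μd' (X ω)) P)
    (hπcm : Measurable πc) (hπc'm : Measurable πc')
    (hπ2m : Measurable π2) (hπ0m : Measurable π0)
    (hπcv : ∀ x, 0 < πc x ∧ πc x < 1) (hπc'v : ∀ x, 0 < πc' x ∧ πc' x < 1)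
    (hπ2v : ∀ x, 0 < π2 x ∧ π2 x < 1) (hπ0v : ∀ x, 0 < π0 x ∧ π0 x < 1)
    (hφ2m : Measurable φ2) (hφ0m : Measurable φ0)
    (hφ2v : ∀ x, 0 < φ2 x ∧ φ2 x ≤ 1) (hφ0v : ∀ x, 0 < φ0 x ∧ φ0 x ≤ 1)
    (hn1i : Integrable (n1 X D1 D2 S φ2 d) P)
    (hn1pos : 0 < ∫ ω, n1 X D1 D2 S φ2 d ω ∂P)
    (hn2i : Integrable (n2 X D1 D2 S φ0 πc πc' π2 π0) P)
    (hn2pos : 0 < ∫ ω, n2 X D1 D2 S φ0 πc πc' π2 π0 ω ∂P)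
    (hint : Integrable (fun ω =>
        (n1 X D1 D2 S φ2 d ω / ∫ ω', n1 X D1 D2 S φ2 d ω' ∂P
          - n2 X D1 D2 S φ0 πc πc' π2 π0 ω / ∫ ω', n2 X D1 D2 S φ0 πc πc' π2 π0 ω' ∂P)
        * (Y2 ω - Y0 ω - μd' (X ω))) P)
    (hφ2_corr : ∀ᵐ ω ∂P, φ2 (X ω) = q d.2 (X ω))
    (hφ0_corr : ∀ᵐ ω ∂P, φ0 (X ω) = q 0 (X ω))
    (hcase :
      (∃ md' : 𝓧 → ℝ,
          IsCondMeanGiven P X (evD D1 D2 (0, 0)) (fun ω => Y2 ω - Y0 ω) md' ∧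
          ∀ᵐ ω ∂P, μd' (X ω) = md' (X ω)) ∨
      (IsCondMeanGiven P X (evD2 D2 d.2) (ind {ω | D1 ω = d.1}) πc ∧
        IsCondMeanGiven P X Set.univ (ind (evD2 D2 d.2)) π2 ∧
        IsCondMeanGiven P X (evD2 D2 0) (ind {ω | D1 ω = 0}) πc' ∧
        IsCondMeanGiven P X Set.univ (ind (evD2 D2 0)) π0)) :
    ∫ ω, (n1 X D1 D2 S φ2 d ω / ∫ ω', n1 X D1 D2 S φ2 d ω' ∂P
          - n2 X D1 D2 S φ0 πc πc' π2 π0 ω / ∫ ω', n2 X D1 D2 S φ0 πc πc' π2 π0 ω' ∂P)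
        * (Y2 ω - Y0 ω - μd' (X ω)) ∂P
      = tau P D1 D2 Y2p d := by
  have hd2 : d.2 ∈ ({0, 1} : Set ℝ) := by
    rcases hd with rfl | rfl | rfl <;> simp
  have hdall : d ∈ allPaths := by
    rcases hd with rfl | rfl | rfl <;> simp [allPaths]
  have h0all : ((0, 0) : ℝ × ℝ) ∈ allPaths := by simp [allPaths]
  have hdisj : ∀ ω, ω ∈ evD D1 D2 d → ω ∉ evD D1 D2 (0, 0) := by
    rintro ω ⟨a, b⟩ ⟨a', b'⟩
    rw [a] at a'; rw [b] at b'
    rcases hd with rfl | rfl | rfl <;> simp at a' b'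
  have hAm : ∀ e : ℝ × ℝ, MeasurableSet (evD D1 D2 e) := fun e =>
    (hD1 (measurableSet_singleton e.1)).inter (hD2 (measurableSet_singleton e.2))
  have hAd := hAm d
  have hA0 := hAm (0, 0)
  have hΔi : Integrable (fun ω => Y2 ω - Y0 ω) P := hY2i.sub hY0i
  have hTi : Integrable (fun ω => Y2p (0, 0) ω - Y0p (0, 0) ω) P :=
    (hY2p _ h0all).2.sub (hY0p _ h0all).2
  obtain ⟨hNA, tr, htrU, htrd⟩ := hDIDd
  obtain ⟨-, tr', htrU', htr0⟩ := hDIDd'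
  have htri : Integrable (fun ω => tr (X ω)) P := by
    have := condMean_integrable hX MeasurableSet.univ hTi htrU
    simpa only [ind_univ, one_mul] using this
  have htreq : ∀ᵐ ω ∂P, tr (X ω) = tr' (X ω) := by
    filter_upwards [condMean_unique hX MeasurableSet.univ hTi htrU htrU'] with ω hω
    rw [ind_univ, one_mul, abs_eq_zero, sub_eq_zero] at hω
    exact hω
  -- `tr` is also a version of the conditional mean of `ΔY` given `D = (0,0)`
  have hon0 : ∀ ω, ind (evD D1 D2 (0, 0)) ω * (Y2p (0, 0) ω - Y0p (0, 0) ω)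
      = ind (evD D1 D2 (0, 0)) ω * (Y2 ω - Y0 ω) := by
    intro ω
    by_cases h : ω ∈ evD D1 D2 (0, 0)
    · obtain ⟨a, b⟩ := h
      rw [hcons0 ω, hcons2 ω, a, b]
    · simp [ind, h]
  have htrΔ : IsCondMeanGiven P X (evD D1 D2 (0, 0)) (fun ω => Y2 ω - Y0 ω) tr := by
    refine ⟨htrU.1, fun h hh hb => ?_⟩
    have := htr0.2 h hh hb
    simp only [hon0] at this
    rw [this]
    refine integral_congr_ae ?_
    filter_upwards [htreq] with ω hω
    rw [hω]
  set r : 𝓧 → ℝ := fun x => πc x * π2 x / (πc' x * π0 x) with hr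
  have hrm : Measurable r := by fun_prop
  -- weights
  have w1 := fun (K : ℝ × 𝓧 → ℝ) (hK : Measurable K) =>
    aux_ipw P X hX Y0 Y2 D1 D2 S hY0 hY2 hD1 hD2 hS hSv q hMAR d hd2 φ2 hφ2m hφ2v hφ2_corr K hK
  have w2 := fun (K : ℝ × 𝓧 → ℝ) (hK : Measurable K) =>
    aux_ipw P X hX Y0 Y2 D1 D2 S hY0 hY2 hD1 hD2 hS hSv q hMAR (0, 0) (by simp) φ0 hφ0m hφ0v
      hφ0_corr K hK
  have hN1 : ∫ ω, n1 X D1 D2 S φ2 d ω ∂P = ∫ ω, ind (evD D1 D2 d) ω ∂P := by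
    have := (w1 (fun _ => 1) measurable_const).2
    simp only [mul_one] at this
    exact this
  have hPd : ∫ ω, ind (evD D1 D2 d) ω ∂P = (P (evD D1 D2 d)).toReal := by
    unfold ind
    rw [integral_indicator hAd]
    simp [Measure.real]
  have en2 : ∀ ω, n2 X D1 D2 S φ0 πc πc' π2 π0 ω
      = S ω / φ0 (X ω) * ind (evD D1 D2 (0, 0)) ω * r (X ω) := by
    intro ω; simp only [n2, hr]; ring
  have hN2 : ∫ ω, n2 X D1 D2 S φ0 πc πc' π2 π0 ω ∂P
      = ∫ ω, ind (evD D1 D2 (0, 0)) ω * r (X ω) ∂P := by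
    simp only [en2]
    exact (w2 (fun p => r p.2) (hrm.comp measurable_snd)).2
  have hc1 := hn1pos.ne'
  have hc2 := hn2pos.ne'
  have hM1 : ∫ ω, n1 X D1 D2 S φ2 d ω * (Y2 ω - Y0 ω - μd' (X ω)) ∂P
      = ∫ ω, ind (evD D1 D2 d) ω * (Y2 ω - Y0 ω - μd' (X ω)) ∂P :=
    (w1 (fun p => p.1 - μd' p.2) (by fun_prop)).2
  have hM2 := w2 (fun p => r p.2 * (p.1 - μd' p.2)) (by fun_prop)
  set c1 := ∫ ω, n1 X D1 D2 S φ2 d ω ∂P with hc1def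
  set c2 := ∫ ω, n2 X D1 D2 S φ0 πc πc' π2 π0 ω ∂P with hc2def
  have j1 : Integrable (fun ω => n1 X D1 D2 S φ2 d ω * (Y2 ω - Y0 ω - μd' (X ω))) P := by
    have := (w1 (fun p => p.1 - μd' p.2) (by fun_prop)).1
    exact this.2 (ind_mul_integrable hAd (hΔi.sub hμd'i))
  have j2 : Integrable (fun ω => n2 X D1 D2 S φ0 πc πc' π2 π0 ω
      * (Y2 ω - Y0 ω - μd' (X ω))) P := by
    have := ((j1.const_mul c1⁻¹).sub hint).const_mul c2
    refine this.congr (Filter.Eventually.of_forall fun ω => ?_)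
    simp only [Pi.sub_apply]
    field_simp
    ring
  have k2 : Integrable (fun ω => ind (evD D1 D2 (0, 0)) ω
      * (r (X ω) * (Y2 ω - Y0 ω - μd' (X ω)))) P := by
    refine hM2.1.1 (j2.congr (Filter.Eventually.of_forall fun ω => ?_))
    simp only [en2]; ring
  have hM2' : ∫ ω, n2 X D1 D2 S φ0 πc πc' π2 π0 ω * (Y2 ω - Y0 ω - μd' (X ω)) ∂P
      = ∫ ω, ind (evD D1 D2 (0, 0)) ω * (r (X ω) * (Y2 ω - Y0 ω - μd' (X ω))) ∂P := by
    rw [← hM2.2]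
    refine integral_congr_ae (Filter.Eventually.of_forall fun ω => ?_)
    simp only [en2]; ring
  have hsplit : ∫ ω, (n1 X D1 D2 S φ2 d ω / c1 - n2 X D1 D2 S φ0 πc πc' π2 π0 ω / c2)
        * (Y2 ω - Y0 ω - μd' (X ω)) ∂P
      = c1⁻¹ * ∫ ω, ind (evD D1 D2 d) ω * (Y2 ω - Y0 ω - μd' (X ω)) ∂P
        - c2⁻¹ * ∫ ω, ind (evD D1 D2 (0, 0)) ω * (r (X ω) * (Y2 ω - Y0 ω - μd' (X ω))) ∂P := by
    rw [← hM1, ← hM2', ← integral_const_mul, ← integral_const_mul,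
      ← integral_sub (j1.const_mul _) (j2.const_mul _)]
    refine integral_congr_ae (Filter.Eventually.of_forall fun ω => ?_)
    simp only
    ring
  -- identification of the treated part
  have one : ∃ C, ∀ x : 𝓧, |(fun _ : 𝓧 => (1 : ℝ)) x| ≤ C := ⟨1, by simp⟩
  have hT1 := hNA (fun _ => 1) measurable_const one
  have hT2 := htrd.2 (fun _ => 1) measurable_const one
  simp only [mul_one] at hT1 hT2
  have hond : ∀ ω, ind (evD D1 D2 d) ω * (Y2 ω - Y0 ω - μd' (X ω))
      = ind (evD D1 D2 d) ω * (Y2p d ω - Y2p (0, 0) ω)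
        + (ind (evD D1 D2 d) ω * (Y2p (0, 0) ω - Y0p (0, 0) ω)
          - ind (evD D1 D2 d) ω * μd' (X ω))
        + (ind (evD D1 D2 d) ω * Y0p (0, 0) ω - ind (evD D1 D2 d) ω * Y0p d ω) := by
    intro ω
    by_cases h : ω ∈ evD D1 D2 d
    · obtain ⟨a, b⟩ := h
      rw [hcons0 ω, hcons2 ω, a, b]
      ring
    · simp [ind, h]
  have a1 := ind_mul_integrable hAd ((hY2p d hdall).2.sub (hY2p _ h0all).2)
  have a2 := ind_mul_integrable hAd hTi
  have a3 := ind_mul_integrable hAd hμd'i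
  have a4 := ind_mul_integrable hAd (hY0p _ h0all).2
  have a5 := ind_mul_integrable hAd (hY0p d hdall).2
  have a6 := ind_mul_integrable hAd htri
  have htau : ∫ ω, ind (evD D1 D2 d) ω * (Y2p d ω - Y2p (0, 0) ω) ∂P
      = ∫ ω in evD D1 D2 d, (Y2p d ω - Y2p (0, 0) ω) ∂P := by
    rw [← integral_indicator hAd]
    refine integral_congr_ae (Filter.Eventually.of_forall fun ω => ?_)
    by_cases h : ω ∈ evD D1 D2 d <;> simp [ind, h]
  have hL : ∫ ω, ind (evD D1 D2 d) ω * (Y2 ω - Y0 ω - μd' (X ω)) ∂P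
      = ∫ ω in evD D1 D2 d, (Y2p d ω - Y2p (0, 0) ω) ∂P
        + ∫ ω, ind (evD D1 D2 d) ω * (tr (X ω) - μd' (X ω)) ∂P := by
    simp only [hond]
    have e3 : ∫ ω, ind (evD D1 D2 d) ω * (tr (X ω) - μd' (X ω)) ∂P
        = ∫ ω, ind (evD D1 D2 d) ω * tr (X ω) ∂P
          - ∫ ω, ind (evD D1 D2 d) ω * μd' (X ω) ∂P := by
      rw [← integral_sub a6 a3]
      simp only [mul_sub]
    rw [integral_add (by exact a1.add (a2.sub a3)) (by exact a4.sub a5),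
      integral_add (by exact a1) (by exact a2.sub a3), integral_sub a2 a3, integral_sub a4 a5,
      e3, htau, hT1, hT2]
    ring
  rw [hsplit, hL]
  unfold tau
  rw [← hPd, ← hN1]
  rcases hcase with ⟨md', hmd, hμeq⟩ | ⟨b1, b2, b3, b4⟩
  · -- correct outcome model
    have hu := condMean_unique hX hA0 hΔi hmd htrΔ
    have hB : MeasurableSet {x | md' x ≠ tr x} := (measurableSet_eq_fun hmd.1 htrU.1).compl
    have hmdtr : ∀ᵐ ω ∂P, md' (X ω) = tr (X ω) := by
      have h1 := hpd'.2 (ind {x | md' x ≠ tr x}) (ind_meas hB) ⟨1, ind_abs _⟩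
      simp only [ind_univ, one_mul] at h1
      have h2 : ∫ ω, ind (evD D1 D2 (0, 0)) ω * ind {x | md' x ≠ tr x} (X ω) ∂P = 0 := by
        refine integral_eq_zero_of_ae ?_
        filter_upwards [hu] with ω hω
        simp only [Pi.zero_apply]
        by_cases h : md' (X ω) = tr (X ω)
        · simp [ind, h]
        · have : |md' (X ω) - tr (X ω)| ≠ 0 := by
            rw [Ne, abs_eq_zero, sub_eq_zero]; exact h
          rw [(mul_eq_zero.1 hω).resolve_right this, zero_mul]
      rw [h2] at h1
      have i0 : Integrable (ind (evD D1 D2 (0, 0))) P := by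
        have := ind_mul_integrable hA0 (integrable_const (1 : ℝ) (μ := P))
        simpa only [mul_one] using this
      have i1 : Integrable (fun ω => pd' (X ω)) P := by
        have := condMean_integrable hX MeasurableSet.univ i0 hpd'
        simpa only [ind_univ, one_mul] using this
      have i2 : Integrable (fun ω => pd' (X ω) * ind {x | md' x ≠ tr x} (X ω)) P :=
        i1.mul_bdd (c := 1) ((ind_meas hB).comp hX).aestronglyMeasurable
          (Filter.Eventually.of_forall fun ω => ind_abs _ _)
      have h3 := (integral_eq_zero_iff_of_nonneg_ae (by
        filter_upwards [hpd'pos] with ω hω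
        exact mul_nonneg hω.le (ind_nonneg _ _)) i2).1 h1.symm
      filter_upwards [h3, hpd'pos] with ω hω hp
      by_contra hne
      simp [ind, hne] at hω
      exact hp.ne' hω
    have z1 : ∫ ω, ind (evD D1 D2 d) ω * (tr (X ω) - μd' (X ω)) ∂P = 0 := by
      refine integral_eq_zero_of_ae ?_
      filter_upwards [hmdtr, hμeq] with ω h1 h2
      rw [h2, h1]; simp
    have z2 : ∫ ω, ind (evD D1 D2 (0, 0)) ω * (r (X ω) * (Y2 ω - Y0 ω - μd' (X ω))) ∂P = 0 := by
      have := aux_ortho hX (W := fun ω => ind (evD D1 D2 (0, 0)) ω * (Y2 ω - Y0 ω - μd' (X ω)))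
        (ind_mul_integrable hA0 (hΔi.sub hμd'i)) ?_ r hrm ?_
      · refine Eq.trans (integral_congr_ae (Filter.Eventually.of_forall fun ω => ?_)) this
        simp only; ring
      · intro h hh hb
        obtain ⟨C, hC⟩ := hb
        have e := hmd.2 h hh ⟨C, hC⟩
        have hbd : ∀ f : Ω → ℝ, Integrable f P → Integrable (fun ω => f ω * h (X ω)) P :=
          fun f hf => hf.mul_bdd (c := C) (hh.comp hX).aestronglyMeasurable
            (Filter.Eventually.of_forall fun ω => hC _)
        have e' : ∫ ω, ind (evD D1 D2 (0, 0)) ω * md' (X ω) * h (X ω) ∂P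
            = ∫ ω, ind (evD D1 D2 (0, 0)) ω * μd' (X ω) * h (X ω) ∂P := by
          refine integral_congr_ae ?_
          filter_upwards [hμeq] with ω h2
          rw [h2]
        rw [e', ← sub_eq_zero, ← integral_sub (hbd _ (ind_mul_integrable hA0 hΔi))
          (hbd _ (ind_mul_integrable hA0 hμd'i))] at e
        refine Eq.trans (integral_congr_ae (Filter.Eventually.of_forall fun ω => ?_)) e
        simp only; ring
      · refine k2.congr (Filter.Eventually.of_forall fun ω => ?_)
        simp only; ring
    rw [z1, z2]; ring
  · -- correct propensity score model
    have pr : ∀ F : 𝓧 → ℝ, Measurable F →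
        (Integrable (fun ω => ind (evD D1 D2 (0, 0)) ω * (r (X ω) * F (X ω))) P ↔
          Integrable (fun ω => ind (evD D1 D2 d) ω * F (X ω)) P) ∧
        ∫ ω, ind (evD D1 D2 (0, 0)) ω * (r (X ω) * F (X ω)) ∂P
          = ∫ ω, ind (evD D1 D2 d) ω * F (X ω) ∂P := by
      intro F hF
      have p1 := aux_prop P X hX D1 D2 hD1 hD2 (0, 0) πc' π0 hπc'v hπ0v b3 b4
        (fun x => r x * F x) (hrm.mul hF)
      have p2 := aux_prop P X hX D1 D2 hD1 hD2 d πc π2 hπcv hπ2v b1 b2 F hF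
      have e : (fun ω => πc' (X ω) * π0 (X ω) * (r (X ω) * F (X ω)))
          = fun ω => πc (X ω) * π2 (X ω) * F (X ω) := by
        funext ω
        have := (hπc'v (X ω)).1.ne'
        have := (hπ0v (X ω)).1.ne'
        simp only [hr]
        field_simp
      simp only [e] at p1
      exact ⟨p1.1.trans p2.1.symm, p1.2.trans p2.2.symm⟩
    have hcc : c2 = c1 := by
      rw [hN2, hN1]
      have := (pr (fun _ => 1) measurable_const).2
      simpa only [mul_one] using this
    have g := pr (fun x => tr x - μd' x) (htrU.1.sub hμd'm)
    have g1 := g.1.2 (ind_mul_integrable hAd (htri.sub hμd'i))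
    have z : ∫ ω, ind (evD D1 D2 (0, 0)) ω * (Y2 ω - Y0 ω - tr (X ω)) * r (X ω) ∂P = 0 := by
      refine aux_ortho hX (W := fun ω => ind (evD D1 D2 (0, 0)) ω * (Y2 ω - Y0 ω - tr (X ω)))
        (ind_mul_integrable hA0 (hΔi.sub htri)) ?_ r hrm ?_
      · intro h hh hb
        obtain ⟨C, hC⟩ := hb
        have e := htrΔ.2 h hh ⟨C, hC⟩
        have hbd : ∀ f : Ω → ℝ, Integrable f P → Integrable (fun ω => f ω * h (X ω)) P :=
          fun f hf => hf.mul_bdd (c := C) (hh.comp hX).aestronglyMeasurable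
            (Filter.Eventually.of_forall fun ω => hC _)
        rw [← sub_eq_zero, ← integral_sub (hbd _ (ind_mul_integrable hA0 hΔi))
          (hbd _ (ind_mul_integrable hA0 htri))] at e
        refine Eq.trans (integral_congr_ae (Filter.Eventually.of_forall fun ω => ?_)) e
        simp only; ring
      · refine (k2.sub g1).congr (Filter.Eventually.of_forall fun ω => ?_)
        simp only [Pi.sub_apply]; ring
    have z' : ∫ ω, ind (evD D1 D2 (0, 0)) ω * (r (X ω) * (Y2 ω - Y0 ω - μd' (X ω))) ∂P
        = ∫ ω, ind (evD D1 D2 d) ω * (tr (X ω) - μd' (X ω)) ∂P := by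
      rw [← g.2, ← sub_eq_zero, ← integral_sub k2 g1]
      refine Eq.trans (integral_congr_ae (Filter.Eventually.of_forall fun ω => ?_)) z
      simp only; ring
    rw [z', hcc]; ring

end DIDMissing
end
end

section
/- (Supplementary lemma: IPW identification under outcome-dependent missingness.) Fix d = (d1,d2) in {(1,1),(0,1),(1,0)} and d' = (0,0), with P(D = d) > 0. Suppose Assumption DID holds for d and for d', Assumption MAR′ holds, P(D = d | X) > 0 and P(D = d' | X) > 0 a.s., and all displayed expectations are finite. Then E[p_d(X)]^{-1} · E[(S/q(D2, ΔY, X)) · (1{D = d} − (p_d(X)/p_{d'}(X)) · 1{D = d'}) · ΔY] = τ_{dd'}. -/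
open MeasureTheory Set
open scoped Classical

noncomputable section

namespace DIDMissing

variable {Ω : Type*} {𝓧 : Type*}

/-- Assumption MAR′: `S ⟂ D₁ ∣ (D₂, ΔY, X)`, where `qf` gives a version of the
missing-data probability `P(S = 1 ∣ D₂, ΔY, X)`, positive a.s. -/
def MARprime [MeasurableSpace Ω] [MeasurableSpace 𝓧] (P : Measure Ω) (X : Ω → 𝓧)
    (D1 D2 S Y0 Y2 : Ω → ℝ) (qf : ℝ × ℝ × 𝓧 → ℝ) : Prop :=
  Measurable qf ∧
  (∀ h : ℝ × ℝ × 𝓧 → ℝ, Measurable h → (∃ C, ∀ p, |h p| ≤ C) →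
      ∫ ω, S ω * h (D2 ω, Y2 ω - Y0 ω, X ω) ∂P
        = ∫ ω, qf (D2 ω, Y2 ω - Y0 ω, X ω) * h (D2 ω, Y2 ω - Y0 ω, X ω) ∂P) ∧
  (∀ᵐ ω ∂P, 0 < qf (D2 ω, Y2 ω - Y0 ω, X ω)) ∧
  (∀ f : ℝ → ℝ, Measurable f → (∃ C, ∀ t, |f t| ≤ C) →
      ∀ h : ℝ × ℝ × 𝓧 → ℝ, Measurable h → (∃ C, ∀ p, |h p| ≤ C) →
        ∫ ω, S ω * f (D1 ω) * h (D2 ω, Y2 ω - Y0 ω, X ω) ∂P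
          = ∫ ω, qf (D2 ω, Y2 ω - Y0 ω, X ω) * f (D1 ω) * h (D2 ω, Y2 ω - Y0 ω, X ω) ∂P)

lemma transfer {E : Type*} [MeasurableSpace Ω] [MeasurableSpace E] {P : Measure Ω}
    {G : Ω → E} (hG : Measurable G) {u v : Ω → ℝ} (hu : Measurable u) (hv : Measurable v)
    (hui : Integrable u P) (hvi : Integrable v P)
    (hu0 : ∀ᵐ ω ∂P, 0 ≤ u ω) (hv0 : ∀ᵐ ω ∂P, 0 ≤ v ω)
    (h : ∀ h : E → ℝ, Measurable h → (∃ C, ∀ x, |h x| ≤ C) →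
      ∫ ω, u ω * h (G ω) ∂P = ∫ ω, v ω * h (G ω) ∂P)
    {k : E → ℝ} (hk : Measurable k) :
    (Integrable (fun ω => u ω * k (G ω)) P ↔ Integrable (fun ω => v ω * k (G ω)) P) ∧
      ∫ ω, u ω * k (G ω) ∂P = ∫ ω, v ω * k (G ω) ∂P := by
  have hun : Measurable fun ω => (u ω).toNNReal := hu.real_toNNReal
  have hvn : Measurable fun ω => (v ω).toNNReal := hv.real_toNNReal
  have aux : ∀ w : Ω → ℝ, Measurable w → Integrable w P → (∀ᵐ ω ∂P, 0 ≤ w ω) →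
      ∀ B : Set E, MeasurableSet B →
      ((P.withDensity fun ω => ((w ω).toNNReal : ENNReal)).map G) B
        = ENNReal.ofReal (∫ ω, w ω * B.indicator (fun _ => (1:ℝ)) (G ω) ∂P) := by
    intro w hw hwi hw0 B hB
    rw [Measure.map_apply hG hB, withDensity_apply _ (hG hB)]
    have : (fun ω => w ω * B.indicator (fun _ => (1:ℝ)) (G ω)) = (G ⁻¹' B).indicator w := by
      funext ω
      by_cases hω : G ω ∈ B <;> simp [indicator, hω]
    rw [this, integral_indicator (hG hB),
      ofReal_integral_eq_lintegral_ofReal hwi.integrableOn (ae_restrict_of_ae hw0)]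
    rfl
  have hm : (P.withDensity fun ω => ((u ω).toNNReal : ENNReal)).map G
      = (P.withDensity fun ω => ((v ω).toNNReal : ENNReal)).map G := by
    ext B hB
    rw [aux u hu hui hu0 B hB, aux v hv hvi hv0 B hB, h _ (measurable_const.indicator hB)]
    refine ⟨1, fun x => ?_⟩
    by_cases hx : x ∈ B <;> simp [hx]
  have eu : (fun ω => (u ω).toNNReal • k (G ω)) =ᵐ[P] fun ω => u ω * k (G ω) := by
    filter_upwards [hu0] with ω hω
    simp [NNReal.smul_def, hω]
  have ev : (fun ω => (v ω).toNNReal • k (G ω)) =ᵐ[P] fun ω => v ω * k (G ω) := by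
    filter_upwards [hv0] with ω hω
    simp [NNReal.smul_def, hω]
  constructor
  · rw [← integrable_congr eu, ← integrable_congr ev,
      ← integrable_withDensity_iff_integrable_smul hun,
      ← integrable_withDensity_iff_integrable_smul hvn]
    have a := integrable_map_measure (μ := P.withDensity fun ω => ((u ω).toNNReal : ENNReal))
      (f := G) (g := k) hk.aestronglyMeasurable hG.aemeasurable
    have b := integrable_map_measure (μ := P.withDensity fun ω => ((v ω).toNNReal : ENNReal))
      (f := G) (g := k) hk.aestronglyMeasurable hG.aemeasurable
    rw [hm] at a
    exact a.symm.trans b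
  · rw [← integral_congr_ae eu, ← integral_congr_ae ev,
      ← integral_withDensity_eq_integral_smul hun (fun ω => k (G ω)),
      ← integral_withDensity_eq_integral_smul hvn (fun ω => k (G ω)),
      ← integral_map hG.aemeasurable hk.aestronglyMeasurable,
      ← integral_map hG.aemeasurable hk.aestronglyMeasurable, hm]

lemma trunc [MeasurableSpace Ω] [MeasurableSpace 𝓧] {P : Measure Ω}
    {X : Ω → 𝓧} (hX : Measurable X) {u v : Ω → ℝ} 
    (h : ∀ h : 𝓧 → ℝ, Measurable h → (∃ C, ∀ x, |h x| ≤ C) →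
      ∫ ω, u ω * h (X ω) ∂P = ∫ ω, v ω * h (X ω) ∂P)
    {k : 𝓧 → ℝ} (hk : Measurable k) (hu : Integrable (fun ω => u ω * k (X ω)) P)
    (hv : Integrable (fun ω => v ω * k (X ω)) P) :
    ∫ ω, u ω * k (X ω) ∂P = ∫ ω, v ω * k (X ω) ∂P := by
  let B : ℕ → Set 𝓧 := fun n => {x | |k x| ≤ n}
  have hB : ∀ n, MeasurableSet (B n) := fun n =>
    measurableSet_le (by fun_prop) measurable_const
  have key : ∀ w : Ω → ℝ, Integrable (fun ω => w ω * k (X ω)) P →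
      Filter.Tendsto (fun n => ∫ ω, w ω * (B n).indicator k (X ω) ∂P) Filter.atTop
        (nhds (∫ ω, w ω * k (X ω) ∂P)) := by
    intro w hw
    have e : ∀ n, (fun ω => w ω * (B n).indicator k (X ω))
        = (X ⁻¹' B n).indicator fun ω => w ω * k (X ω) := by
      intro n; funext ω
      by_cases hω : X ω ∈ B n <;> simp [indicator, hω]
    simp_rw [e, integral_indicator (hX (hB _))]
    have := tendsto_setIntegral_of_monotone (μ := P) (s := fun n => X ⁻¹' B n)
      (f := fun ω => w ω * k (X ω)) (fun n => hX (hB n)) ?_ hw.integrableOn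
    · have hU : (⋃ n, X ⁻¹' B n) = univ := by
        ext ω; simp only [mem_iUnion, mem_univ, iff_true]
        exact exists_nat_ge |k (X ω)|
      simpa [hU] using this
    · intro n m hnm ω (hω : |k (X ω)| ≤ n)
      exact le_trans hω (by exact_mod_cast hnm)
  refine tendsto_nhds_unique (key u hu) ?_
  have := key v hv
  refine this.congr fun n => (h _ (hk.indicator (hB n)) ⟨n, fun x => ?_⟩).symm
  by_cases hx : x ∈ B n
  · rw [indicator_of_mem hx]; exact hx
  · simp [hx]

lemma version [mΩ : MeasurableSpace Ω] [m𝓧 : MeasurableSpace 𝓧] {P : Measure Ω}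
    [IsProbabilityMeasure P]
    {X : Ω → 𝓧} (hX : Measurable X) {Z : Ω → ℝ} (hZ : Integrable Z P) {g : 𝓧 → ℝ}
    (hg : IsCondMeanGiven P X Set.univ Z g) :
    (fun ω => g (X ω)) =ᵐ[P] P[Z | m𝓧.comap X] := by
  obtain ⟨hgm, hg⟩ := hg
  have hm : m𝓧.comap X ≤ mΩ := hX.comap_le
  let B : ℕ → Set 𝓧 := fun n => {x | |g x| ≤ n}
  have hB : ∀ n, MeasurableSet (B n) := fun n =>
    measurableSet_le (by fun_prop) measurable_const
  have hBb : ∀ n x, |(B n).indicator g x| ≤ n := by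
    intro n x
    by_cases hx : x ∈ B n
    · rw [indicator_of_mem hx]; exact hx
    · simp [hx]
  have hXm : Measurable[m𝓧.comap X] X := comap_measurable X
  have key : ∀ n, (fun ω => (B n).indicator g (X ω))
      =ᵐ[P] (X ⁻¹' B n).indicator (P[Z | m𝓧.comap X]) := by
    intro n
    refine Filter.EventuallyEq.trans ?_ (condExp_indicator hZ ⟨B n, hB n, rfl⟩)
    have hint : Integrable (fun ω => (B n).indicator g (X ω)) P :=
      Integrable.of_bound ((hgm.indicator (hB n)).comp hX).aestronglyMeasurable n
        (Filter.Eventually.of_forall fun ω => hBb n (X ω))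
    refine ae_eq_condExp_of_forall_setIntegral_eq hm (hZ.indicator (hX (hB n)))
      (fun s _ _ => hint.integrableOn) ?_ ?_
    · rintro s ⟨T, hT, rfl⟩ -
      have := hg ((B n ∩ T).indicator fun _ => 1) (measurable_const.indicator ((hB n).inter hT))
        ⟨1, fun x => by by_cases hx : x ∈ B n ∩ T <;> simp [hx]⟩
      rw [← integral_indicator (hX hT), ← integral_indicator (hX hT)]
      convert this.symm using 2 <;> funext ω <;> by_cases h1 : X ω ∈ B n <;>
        by_cases h2 : X ω ∈ T <;> simp [indicator, ind, h1, h2]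
    · exact ((hgm.indicator (hB n)).comp hXm).aestronglyMeasurable
  filter_upwards [ae_all_iff.2 key] with ω hω
  obtain ⟨n, hn⟩ := exists_nat_ge |g (X ω)|
  have hmem : X ω ∈ B n := hn
  have := hω n
  simpa [indicator, hmem] using this

/-- Supplementary Lemma: IPW identification of the PDATT under outcome-dependent
missingness (Assumption MAR′). -/
theorem statement_11
    [MeasurableSpace Ω] [m𝓧 : MeasurableSpace 𝓧]
    (P : Measure Ω) [IsProbabilityMeasure P]
    (X : Ω → 𝓧) (hX : Measurable X)
    (Y0 Y2 D1 D2 S : Ω → ℝ)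
    (hY0 : Measurable Y0) (hY2 : Measurable Y2)
    (hD1 : Measurable D1) (hD2 : Measurable D2) (hS : Measurable S)
    (hY0i : Integrable Y0 P) (hY2i : Integrable Y2 P)
    (hD1v : ∀ ω, D1 ω = 0 ∨ D1 ω = 1) (hD2v : ∀ ω, D2 ω = 0 ∨ D2 ω = 1)
    (hSv : ∀ ω, S ω = 0 ∨ S ω = 1)
    (Y0p Y2p : ℝ × ℝ → Ω → ℝ)
    (hY0p : ∀ e ∈ allPaths, Measurable (Y0p e) ∧ Integrable (Y0p e) P)
    (hY2p : ∀ e ∈ allPaths, Measurable (Y2p e) ∧ Integrable (Y2p e) P)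
    (hcons0 : ∀ ω, Y0 ω = Y0p (D1 ω, D2 ω) ω)
    (hcons2 : ∀ ω, Y2 ω = Y2p (D1 ω, D2 ω) ω)
    (d : ℝ × ℝ) (hd : d ∈ threePaths) (hPd : 0 < P (evD D1 D2 d))
    (hDIDd : DID P X D1 D2 Y0p Y2p d) (hDIDd' : DID P X D1 D2 Y0p Y2p (0, 0))
    (qf : ℝ × ℝ × 𝓧 → ℝ) (hMAR' : MARprime P X D1 D2 S Y0 Y2 qf)
    (pd pd' : 𝓧 → ℝ)
    (hpd : IsCondMeanGiven P X Set.univ (ind (evD D1 D2 d)) pd)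
    (hpd' : IsCondMeanGiven P X Set.univ (ind (evD D1 D2 (0, 0))) pd')
    (hpdpos : ∀ᵐ ω ∂P, 0 < pd (X ω)) (hpd'pos : ∀ᵐ ω ∂P, 0 < pd' (X ω))
    (hpdi : Integrable (fun ω => pd (X ω)) P)
    (hfin : Integrable (fun ω =>
        S ω / qf (D2 ω, Y2 ω - Y0 ω, X ω)
          * (ind (evD D1 D2 d) ω - pd (X ω) / pd' (X ω) * ind (evD D1 D2 (0, 0)) ω)
          * (Y2 ω - Y0 ω)) P) :
    (∫ ω, pd (X ω) ∂P)⁻¹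
        * ∫ ω, S ω / qf (D2 ω, Y2 ω - Y0 ω, X ω)
            * (ind (evD D1 D2 d) ω - pd (X ω) / pd' (X ω) * ind (evD D1 D2 (0, 0)) ω)
            * (Y2 ω - Y0 ω) ∂P
      = tau P D1 D2 Y2p d := by
  obtain ⟨hqm, hq1, hq0, hqf⟩ := hMAR'
  obtain ⟨hna, tr, htr, htrd⟩ := hDIDd
  obtain ⟨-, tr', htr', htrd'⟩ := hDIDd'
  have h0all : ((0, 0) : ℝ × ℝ) ∈ allPaths := by simp [allPaths]
  have hdall : d ∈ allPaths := by
    rcases hd with h | h | h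
    all_goals try rw [mem_singleton_iff] at h
    all_goals subst h
    all_goals simp [allPaths]
  have hdne : d ≠ (0, 0) := by
    rcases hd with h | h | h
    all_goals try rw [mem_singleton_iff] at h
    all_goals subst h
    all_goals simp
  obtain ⟨hY0dm, hY0di⟩ := hY0p d hdall
  obtain ⟨hY2dm, hY2di⟩ := hY2p d hdall
  obtain ⟨hY00m, hY00i⟩ := hY0p _ h0all
  obtain ⟨hY20m, hY20i⟩ := hY2p _ h0all
  have hEm : ∀ e, MeasurableSet (evD D1 D2 e) := fun e =>
    (measurableSet_eq_fun hD1 measurable_const).inter (measurableSet_eq_fun hD2 measurable_const)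
  have hindm : ∀ e, Measurable (ind (evD D1 D2 e)) := fun e =>
    measurable_const.indicator (hEm e)
  have hindi : ∀ e, Integrable (ind (evD D1 D2 e)) P := fun e =>
    (integrable_const (1:ℝ)).indicator (hEm e)
  have hind0 : ∀ e ω, 0 ≤ ind (evD D1 D2 e) ω := fun e ω =>
    indicator_nonneg (fun _ _ => zero_le_one) ω
  have hmul : ∀ e (Z : Ω → ℝ), (fun ω => ind (evD D1 D2 e) ω * Z ω)
      = (evD D1 D2 e).indicator Z := by
    intro e Z; funext ω
    by_cases h : ω ∈ evD D1 D2 e <;> simp [ind, h]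
  have hmuli : ∀ e (Z : Ω → ℝ), Integrable Z P →
      Integrable (fun ω => ind (evD D1 D2 e) ω * Z ω) P := by
    intro e Z hZ; rw [hmul]; exact hZ.indicator (hEm e)
  have hcons : ∀ e ω, ind (evD D1 D2 e) ω * (Y2 ω - Y0 ω)
      = ind (evD D1 D2 e) ω * (Y2p e ω - Y0p e ω) := by
    intro e ω
    by_cases h : ω ∈ evD D1 D2 e
    · have h' : (D1 ω, D2 ω) = e := Prod.ext h.1 h.2
      rw [hcons0 ω, hcons2 ω, h']
    · simp [ind, h]
  have hprod : ∀ e ω, ind (evD D1 D2 e) ω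
      = ({e.1} : Set ℝ).indicator (fun _ => (1:ℝ)) (D1 ω)
        * ({e.2} : Set ℝ).indicator (fun _ => (1:ℝ)) (D2 ω) := by
    intro e ω
    by_cases h1 : D1 ω = e.1 <;> by_cases h2 : D2 ω = e.2 <;> simp [ind, evD, h1, h2, indicator]
  have hdisj : ∀ ω, ind (evD D1 D2 d) ω * ind (evD D1 D2 (0,0)) ω = 0 := by
    intro ω
    by_cases h : ω ∈ evD D1 D2 d
    · have : ω ∉ evD D1 D2 (0, 0) := fun h' =>
        hdne (Prod.ext (h.1.symm.trans h'.1) (h.2.symm.trans h'.2))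
      simp [ind, this]
    · simp [ind, h]
  have hsq : ∀ e ω, ind (evD D1 D2 e) ω * ind (evD D1 D2 e) ω = ind (evD D1 D2 e) ω := by
    intro e ω
    by_cases h : ω ∈ evD D1 D2 e <;> simp [ind, h]
  -- the conditioning variable
  let G : Ω → ℝ × ℝ × 𝓧 := fun ω => (D2 ω, Y2 ω - Y0 ω, X ω)
  have hG : Measurable G := hD2.prodMk ((hY2.sub hY0).prodMk hX)
  have hSi : Integrable S P := Integrable.of_bound hS.aestronglyMeasurable 1
    (Filter.Eventually.of_forall fun ω => by rcases hSv ω with h | h <;> simp [h])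
  have hqi : Integrable (fun ω => qf (G ω)) P := by
    have hc : IsCondMeanGiven P G Set.univ S qf := by
      refine ⟨hqm, fun h hh hb => ?_⟩
      simpa [ind] using hq1 h hh hb
    exact (integrable_congr (version hG hSi hc)).2 integrable_condExp
  -- removal of S/q
  have ipw : ∀ e (r : 𝓧 → ℝ), Measurable r →
      Integrable (fun ω => S ω / qf (G ω) * (r (X ω) * ind (evD D1 D2 e) ω) * (Y2 ω - Y0 ω)) P →
      Integrable (fun ω => ind (evD D1 D2 e) ω * (Y2 ω - Y0 ω) * r (X ω)) P ∧
      ∫ ω, S ω / qf (G ω) * (r (X ω) * ind (evD D1 D2 e) ω) * (Y2 ω - Y0 ω) ∂P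
        = ∫ ω, ind (evD D1 D2 e) ω * (Y2 ω - Y0 ω) * r (X ω) ∂P := by
    intro e r hr hi
    let f : ℝ → ℝ := ({e.1} : Set ℝ).indicator fun _ => 1
    have hf : Measurable f := measurable_const.indicator (measurableSet_singleton _)
    have hf1 : ∀ t, |f t| ≤ 1 := fun t => by
      by_cases h : t = e.1 <;> simp [f, indicator, h]
    have hf0 : ∀ t, 0 ≤ f t := fun t => indicator_nonneg (fun _ _ => zero_le_one) t
    let f2 : ℝ → ℝ := ({e.2} : Set ℝ).indicator fun _ => 1
    have hf2 : Measurable f2 := measurable_const.indicator (measurableSet_singleton _)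
    let k : ℝ × ℝ × 𝓧 → ℝ := fun p => f2 p.1 * p.2.1 * r p.2.2 / qf p
    have hk : Measurable k := by
      have h1 : Measurable fun p : ℝ × ℝ × 𝓧 => f2 p.1 := hf2.comp measurable_fst
      have h2 : Measurable fun p : ℝ × ℝ × 𝓧 => r p.2.2 := hr.comp (by fun_prop)
      exact ((h1.mul (by fun_prop)).mul h2).div hqm
    have hfb : ∀ w : Ω → ℝ, Integrable w P → Integrable (fun ω => w ω * f (D1 ω)) P := by
      intro w hw
      exact hw.mul_bdd (c := 1) (hf.comp hD1).aestronglyMeasurable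
        (Filter.Eventually.of_forall fun ω => hf1 _)
    obtain ⟨t1, t2⟩ := transfer (P := P) hG (u := fun ω => S ω * f (D1 ω))
      (v := fun ω => qf (G ω) * f (D1 ω)) (hS.mul (hf.comp hD1))
      ((hqm.comp hG).mul (hf.comp hD1)) (hfb _ hSi) (hfb _ hqi)
      (Filter.Eventually.of_forall fun ω => mul_nonneg
        (by rcases hSv ω with h | h <;> simp [h]) (hf0 _))
      (hq0.mono fun ω hω => mul_nonneg hω.le (hf0 _))
      (fun h hh hb => hqf f hf ⟨1, hf1⟩ h hh hb) hk
    have e1 : (fun ω => S ω * f (D1 ω) * k (G ω))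
        = fun ω => S ω / qf (G ω) * (r (X ω) * ind (evD D1 D2 e) ω) * (Y2 ω - Y0 ω) := by
      funext ω
      rw [hprod e ω]
      simp only [k, G, f, f2]
      ring
    have e2 : (fun ω => qf (G ω) * f (D1 ω) * k (G ω))
        =ᵐ[P] fun ω => ind (evD D1 D2 e) ω * (Y2 ω - Y0 ω) * r (X ω) := by
      filter_upwards [hq0] with ω hω
      have hne : qf (G ω) ≠ 0 := hω.ne'
      rw [hprod e ω]
      change qf (G ω) * f (D1 ω) * (f2 (D2 ω) * (Y2 ω - Y0 ω) * r (X ω) / qf (G ω))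
        = f (D1 ω) * f2 (D2 ω) * (Y2 ω - Y0 ω) * r (X ω)
      field_simp
    rw [e1] at t1 t2
    rw [integrable_congr e2] at t1
    rw [integral_congr_ae e2] at t2
    exact ⟨t1.1 hi, t2⟩
  let r : 𝓧 → ℝ := fun x => pd x / pd' x
  have hr : Measurable r := hpd.1.div hpd'.1
  have hA : Integrable (fun ω =>
      S ω / qf (G ω) * ((1:ℝ) * ind (evD D1 D2 d) ω) * (Y2 ω - Y0 ω)) P := by
    refine (hmuli d _ hfin).congr (Filter.Eventually.of_forall fun ω => ?_)
    linear_combination (S ω / qf (G ω) * (Y2 ω - Y0 ω)) * hsq d ω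
      - (S ω / qf (G ω) * (Y2 ω - Y0 ω)) * r (X ω) * hdisj ω
  have hB : Integrable (fun ω =>
      S ω / qf (G ω) * (r (X ω) * ind (evD D1 D2 (0,0)) ω) * (Y2 ω - Y0 ω)) P := by
    refine (hmuli (0,0) _ hfin).neg.congr (Filter.Eventually.of_forall fun ω => ?_)
    simp only [Pi.neg_apply]
    linear_combination (S ω / qf (G ω) * (Y2 ω - Y0 ω)) * r (X ω) * hsq (0,0) ω
      - (S ω / qf (G ω) * (Y2 ω - Y0 ω)) * hdisj ω
  obtain ⟨-, hA2⟩ := ipw d (fun _ => 1) measurable_const hA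
  obtain ⟨hB1, hB2⟩ := ipw (0,0) r hr hB
  have hsplit : ∫ ω, S ω / qf (D2 ω, Y2 ω - Y0 ω, X ω)
            * (ind (evD D1 D2 d) ω - pd (X ω) / pd' (X ω) * ind (evD D1 D2 (0, 0)) ω)
            * (Y2 ω - Y0 ω) ∂P
      = ∫ ω, ind (evD D1 D2 d) ω * (Y2 ω - Y0 ω) * 1 ∂P
        - ∫ ω, ind (evD D1 D2 (0,0)) ω * (Y2 ω - Y0 ω) * r (X ω) ∂P := by
    rw [← hA2, ← hB2, ← integral_sub hA hB]
    refine integral_congr_ae (Filter.Eventually.of_forall fun ω => ?_)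
    simp only [G, r]
    ring
  -- trend versions
  have hT : Integrable (fun ω => Y2p (0,0) ω - Y0p (0,0) ω) P := hY20i.sub hY00i
  have vtr := version hX hT htr
  have vtr' := version hX hT htr'
  have htri : Integrable (fun ω => tr' (X ω)) P := (integrable_congr vtr').2 integrable_condExp
  have hpd'i : Integrable (fun ω => pd' (X ω)) P :=
    (integrable_congr (version hX (hindi _) hpd')).2 integrable_condExp
  have trd := fun (k : 𝓧 → ℝ) (hk : Measurable k) => transfer (P := P) hX
    (u := ind (evD D1 D2 d)) (v := fun ω => pd (X ω)) (hindm d) (hpd.1.comp hX) (hindi d) hpdi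
    (Filter.Eventually.of_forall (hind0 d)) (hpdpos.mono fun ω h => h.le)
    (fun h hh hb => by simpa [ind] using hpd.2 h hh hb) hk
  have trd' := fun (k : 𝓧 → ℝ) (hk : Measurable k) => transfer (P := P) hX
    (u := ind (evD D1 D2 (0,0))) (v := fun ω => pd' (X ω)) (hindm _) (hpd'.1.comp hX) (hindi _)
    hpd'i (Filter.Eventually.of_forall (hind0 _)) (hpd'pos.mono fun ω h => h.le)
    (fun h hh hb => by simpa [ind] using hpd'.2 h hh hb) hk
  obtain ⟨c1, c2⟩ := trd tr' htr'.1
  obtain ⟨c1', c2'⟩ := trd' (fun x => tr' x * r x) (htr'.1.mul hr)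
  have e3 : (fun ω => pd' (X ω) * (tr' (X ω) * r (X ω))) =ᵐ[P] fun ω => pd (X ω) * tr' (X ω) := by
    filter_upwards [hpd'pos] with ω hω
    have := hω.ne'
    simp only [r]
    field_simp
  rw [integrable_congr e3] at c1'
  rw [integral_congr_ae e3] at c2'
  have hi3 : Integrable (fun ω => ind (evD D1 D2 (0,0)) ω * tr' (X ω) * r (X ω)) P := by
    simp_rw [mul_assoc]
    exact c1'.2 (c1.1 (hmuli d _ htri))
  have hBfin : ∫ ω, ind (evD D1 D2 (0,0)) ω * (Y2 ω - Y0 ω) * r (X ω) ∂P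
      = ∫ ω, ind (evD D1 D2 d) ω * (Y2p (0,0) ω - Y0p (0,0) ω) ∂P := by
    simp_rw [hcons] at hB1 ⊢
    rw [trunc hX (fun h hh hb => htrd'.2 h hh hb) hr hB1 hi3]
    simp_rw [mul_assoc]
    rw [c2', ← c2]
    have h1 := htrd.2 (fun _ => 1) measurable_const ⟨1, fun _ => by simp⟩
    simp only [mul_one] at h1
    rw [h1]
    refine integral_congr_ae ?_
    filter_upwards [vtr, vtr'] with ω h2 h3
    rw [h2, h3]
  have hAfin : ∫ ω, ind (evD D1 D2 d) ω * (Y2 ω - Y0 ω) * 1 ∂P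
      = ∫ ω, ind (evD D1 D2 d) ω * Y2p d ω ∂P - ∫ ω, ind (evD D1 D2 d) ω * Y0p (0,0) ω ∂P := by
    have h1 := hna (fun _ => 1) measurable_const ⟨1, fun _ => by simp⟩
    simp only [mul_one] at h1 ⊢
    rw [← h1, ← integral_sub (hmuli d _ hY2di) (hmuli d _ hY0di)]
    refine integral_congr_ae (Filter.Eventually.of_forall fun ω => ?_)
    simp only [hcons, mul_sub]
  have hpint : ∫ ω, pd (X ω) ∂P = (P (evD D1 D2 d)).toReal := by
    have h1 := (trd (fun _ => 1) measurable_const).2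
    simp only [mul_one] at h1
    rw [← h1]
    simp [ind, integral_indicator (hEm d), Measure.real]
  rw [hsplit, hBfin, hAfin, hpint, tau, ← integral_indicator (hEm d), ← hmul]
  congr 1
  rw [← integral_sub (hmuli d _ hY2di) (hmuli d _ hY00i),
    ← integral_sub (f := fun ω => ind (evD D1 D2 d) ω * Y2p d ω - ind (evD D1 D2 d) ω * Y0p (0,0) ω)
      ((hmuli d _ hY2di).sub (hmuli d _ hY00i)) (hmuli d _ hT)]
  refine integral_congr_ae (Filter.Eventually.of_forall fun ω => ?_)
  simp only []
  ring


end DIDMissing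
end
end

section
/- (Identification of the propensity score under outcome-dependent missingness.) Fix a path d = (d1,d2) in {0,1}^2. Suppose Assumption MAR′ holds and (S/q(D2, ΔY, X)) · 1{D = d} is integrable. Then p_d(X) = E[(S/q(D2, ΔY, X)) · 1{D = d} | X] a.s., where E[· | X] is conditional expectation given σ(X). -/
open MeasureTheory Set
open scoped Classical

noncomputable section

namespace DIDMissing

variable {Ω : Type*} {𝓧 : Type*}

/-- Identification of the propensity score under outcome-dependent missingness:
`p_d(X) = E[(S / q(D₂, ΔY, X)) · 1{D = d} ∣ σ(X)]` a.s. -/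
theorem statement_12
    [MeasurableSpace Ω] [m𝓧 : MeasurableSpace 𝓧]
    (P : Measure Ω) [IsProbabilityMeasure P]
    (X : Ω → 𝓧) (hX : Measurable X)
    (Y0 Y2 D1 D2 S : Ω → ℝ)
    (hY0 : Measurable Y0) (hY2 : Measurable Y2)
    (hD1 : Measurable D1) (hD2 : Measurable D2) (hS : Measurable S)
    (hY0i : Integrable Y0 P) (hY2i : Integrable Y2 P)
    (hD1v : ∀ ω, D1 ω = 0 ∨ D1 ω = 1) (hD2v : ∀ ω, D2 ω = 0 ∨ D2 ω = 1)
    (hSv : ∀ ω, S ω = 0 ∨ S ω = 1)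
    (d : ℝ × ℝ) (hd : d ∈ allPaths)
    (qf : ℝ × ℝ × 𝓧 → ℝ) (hMAR' : MARprime P X D1 D2 S Y0 Y2 qf)
    (hint : Integrable
        (fun ω => S ω / qf (D2 ω, Y2 ω - Y0 ω, X ω) * ind (evD D1 D2 d) ω) P) :
    P[ind (evD D1 D2 d)|MeasurableSpace.comap X m𝓧]
      =ᵐ[P]
    P[fun ω => S ω / qf (D2 ω, Y2 ω - Y0 ω, X ω) * ind (evD D1 D2 d) ω|
        MeasurableSpace.comap X m𝓧] := by
  obtain ⟨hqm, -, hpos, hci⟩ := hMAR'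
  have hm : MeasurableSpace.comap X m𝓧 ≤ ‹MeasurableSpace Ω› := hX.comap_le
  have hA : MeasurableSet (evD D1 D2 d) :=
    (hD1 (measurableSet_singleton d.1)).inter (hD2 (measurableSet_singleton d.2))
  have hindm : Measurable (ind (evD D1 D2 d)) := measurable_const.indicator hA
  have hindi : Integrable (ind (evD D1 D2 d)) P := (integrable_const (1 : ℝ)).indicator hA
  have hW : Measurable (fun ω => (D2 ω, Y2 ω - Y0 ω, X ω)) :=
    hD2.prodMk ((hY2.sub hY0).prodMk hX)
  have hQ : Measurable (fun ω => qf (D2 ω, Y2 ω - Y0 ω, X ω)) := hqm.comp hW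
  have key : ∀ B : Set 𝓧, MeasurableSet B →
      ∫ ω in X ⁻¹' B, S ω / qf (D2 ω, Y2 ω - Y0 ω, X ω) * ind (evD D1 D2 d) ω ∂P
        = ∫ ω in X ⁻¹' B, ind (evD D1 D2 d) ω ∂P := by
    intro B hB
    have hB' : MeasurableSet (X ⁻¹' B) := hX hB
    have lim : ∀ F : Ω → ℝ, Integrable F P → Filter.Tendsto
        (fun n : ℕ => ∫ ω in X ⁻¹' B,
          {ω | 1 / ((n : ℝ) + 1) ≤ qf (D2 ω, Y2 ω - Y0 ω, X ω)}.indicator F ω ∂P)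
        Filter.atTop (nhds (∫ ω in X ⁻¹' B, F ω ∂P)) := by
      intro F hF
      refine tendsto_integral_of_dominated_convergence (fun ω => ‖F ω‖) ?_ ?_ ?_ ?_
      · intro n
        exact (hF.aestronglyMeasurable.indicator
          (measurableSet_le measurable_const hQ)).restrict
      · exact hF.norm.restrict
      · intro n
        exact Filter.Eventually.of_forall fun ω => norm_indicator_le_norm_self _ _
      · filter_upwards [ae_restrict_of_ae hpos] with ω hω
        apply tendsto_const_nhds.congr'
        filter_upwards [tendsto_one_div_add_atTop_nhds_zero_nat.eventually
          (gt_mem_nhds hω)] with n hn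
        rw [Set.indicator_of_mem]
        exact hn.le
    refine tendsto_nhds_unique (lim _ hint) ((lim _ hindi).congr fun n => ?_)
    have hn0 : (0 : ℝ) < 1 / ((n : ℝ) + 1) := by positivity
    let T : Set (ℝ × ℝ × 𝓧) := {p | p.1 = d.2} ∩ ({p | p.2.2 ∈ B} ∩ {p | 1 / ((n : ℝ) + 1) ≤ qf p})
    have hT : MeasurableSet T :=
      (measurable_fst (measurableSet_singleton d.2)).inter
        (((measurable_snd.comp measurable_snd) hB).inter (measurableSet_le measurable_const hqm))
    have h1 := hci (({d.1} : Set ℝ).indicator fun _ => 1)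
      (measurable_const.indicator (measurableSet_singleton d.1))
      ⟨1, fun t => by by_cases h : t ∈ ({d.1} : Set ℝ) <;> simp [Set.indicator, h]⟩
      (T.indicator fun p => (qf p)⁻¹) (hqm.inv.indicator hT)
      ⟨(1 / ((n : ℝ) + 1))⁻¹, fun p => by
        by_cases h : p ∈ T
        · have h2 : 1 / ((n : ℝ) + 1) ≤ qf p := h.2.2
          rw [Set.indicator_of_mem h, abs_of_pos (inv_pos.2 (hn0.trans_le h2))]
          exact inv_anti₀ hn0 h2
        · rw [Set.indicator_of_notMem h, abs_zero]
          positivity⟩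
    rw [← integral_indicator hB', ← integral_indicator hB']
    refine Eq.trans ?_ (h1.symm.trans ?_)
    · refine integral_congr_ae (Filter.Eventually.of_forall fun ω => ?_)
      by_cases a : D1 ω = d.1 <;> by_cases b : D2 ω = d.2 <;> by_cases c : X ω ∈ B <;>
        by_cases e : 1 / ((n : ℝ) + 1) ≤ qf (D2 ω, Y2 ω - Y0 ω, X ω)
      all_goals
        have e' := e
        simp only [Set.indicator, ind, evD, T, Set.mem_inter_iff, Set.mem_ofPred_eq,
          Set.mem_preimage, Set.mem_singleton_iff, a, b, c, e, and_true, and_false, true_and,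
          false_and, if_true, if_false, mul_zero, zero_mul, mul_one]
        try simp only [b] at e'
        try simp
        try
          split_ifs with h3
          · exact (mul_inv_cancel₀ (hn0.trans_le ((one_div _).trans_le h3)).ne').symm
          · rfl
    · refine integral_congr_ae (Filter.Eventually.of_forall fun ω => ?_)
      by_cases a : D1 ω = d.1 <;> by_cases b : D2 ω = d.2 <;> by_cases c : X ω ∈ B <;>
        by_cases e : 1 / ((n : ℝ) + 1) ≤ qf (D2 ω, Y2 ω - Y0 ω, X ω)
      all_goals
        have e' := e
        simp only [Set.indicator, ind, evD, T, Set.mem_inter_iff, Set.mem_ofPred_eq,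
          Set.mem_preimage, Set.mem_singleton_iff, a, b, c, e, and_true, and_false, true_and,
          false_and, if_true, if_false, mul_zero, zero_mul, mul_one]
        try simp only [b] at e'
        try simp [div_eq_mul_inv]
  symm
  refine ae_eq_condExp_of_forall_setIntegral_eq hm hindi
    (fun s _ _ => integrable_condExp.integrableOn) ?_
    stronglyMeasurable_condExp.aestronglyMeasurable
  rintro s ⟨B, hB, rfl⟩ _
  rw [setIntegral_condExp hm hint ⟨B, hB, rfl⟩]
  exact key B hB
end DIDMissing
end
end
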